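/- arXiv:math/0606451 — 6 statements merged into one kernel-verified Lean document; each statement's English description precedes it below -/
import Mathlib

section
/- Let n ≥ 3 and let c₁, …, cₙ be nonzero integers such that cᵢ > 0 for some i and cⱼ < 0 for some j. Then for every 2-coloring χ : ℤ⁺ → {0,1} there exist positive integers x₁, …, xₙ (not necessarily distinct) with c₁x₁ + c₂x₂ + ⋯ + cₙxₙ = 0 and χ(x₁) = χ(x₂) = ⋯ = χ(xₙ). -/
/-!
Identifying variables reduces the equation to `a x + b y = c z` with `a, b, c > 0`, up to a global
sign. Its solutions include `x = bc i`, `y = ac k`, `z = ab (i + k)`. If no such solution is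
monochromatic, one of the colorings `i ↦ χ (bc i)` and `k ↦ χ (ac k)` is eventually constant: when
the first changes color between `i` and `i + 1`, comparing `(i + 1) + k` with `i + (k + 1)`
propagates the color of `bc (i + 1)` from `ac k` to `ac (k + 1)`. So `χ` is constant on the
multiples of some positive integer, and any positive solution can be scaled into those multiples.
-/

open Filter Finset

/-- The equation `∑ i, c i * x i = 0` has a solution in positive integers all of whose entries
receive the same color under `χ`. The color of `0` is irrelevant. -/
def HasMonochromaticSolution {ι κ : Type*} [Fintype ι] (χ : ℕ → κ) (c : ι → ℤ) : Prop :=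
  ∃ x : ι → ℕ, (∀ i, 0 < x i) ∧ (∑ i, c i * (x i : ℤ)) = 0 ∧ ∀ i j, χ (x i) = χ (x j)

namespace HasMonochromaticSolution

variable {ι κ : Type*} [Fintype ι] {χ : ℕ → κ} {c : ι → ℤ}

theorem of_neg (h : HasMonochromaticSolution χ (-c)) : HasMonochromaticSolution χ c := by
  obtain ⟨x, hx, hsum, hmono⟩ := h
  exact ⟨x, hx, by simpa using hsum, hmono⟩

theorem of_sum_fiber {τ : Type*} [Fintype τ] [DecidableEq τ] (f : ι → τ)
    (h : HasMonochromaticSolution χ fun t ↦ ∑ i with f i = t, c i) :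
    HasMonochromaticSolution χ c := by
  obtain ⟨x, hx, hsum, hmono⟩ := h
  refine ⟨x ∘ f, fun i ↦ hx (f i), ?_, fun i j ↦ hmono (f i) (f j)⟩
  calc ∑ i, c i * (x (f i) : ℤ)
      = ∑ t, ∑ i with f i = t, c i * (x (f i) : ℤ) := (sum_fiberwise _ f _).symm
    _ = ∑ t, (∑ i with f i = t, c i) * (x t : ℤ) := by
        refine sum_congr rfl fun t _ ↦ ?_
        rw [sum_mul]
        exact sum_congr rfl fun i hi ↦ by rw [(mem_filter.1 hi).2]
    _ = 0 := hsum

theorem of_eventuallyConst {d : ℕ} (hd : 0 < d) (hχ : EventuallyConst (fun m ↦ χ (d * m)) atTop)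
    {x : ι → ℕ} (hx : ∀ i, 0 < x i) (hsum : ∑ i, c i * (x i : ℤ) = 0) :
    HasMonochromaticSolution χ c := by
  obtain ⟨N, hN⟩ := eventuallyConst_atTop.1 hχ
  have color_scaled (i : ι) : χ (d * ((N + 1) * x i)) = χ (d * N) :=
    hN _ (by nlinarith [hx i])
  refine ⟨fun i ↦ d * ((N + 1) * x i), fun i ↦ ?_, ?_, fun i j ↦ ?_⟩
  · have := hx i
    positivity
  · calc ∑ i, c i * ((d * ((N + 1) * x i) : ℕ) : ℤ)
        = d * (N + 1) * ∑ i, c i * (x i : ℤ) := by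
          rw [mul_sum]
          exact sum_congr rfl fun i _ ↦ by push_cast; ring
      _ = 0 := by rw [hsum, mul_zero]
  · rw [color_scaled, color_scaled]

end HasMonochromaticSolution

theorem eventuallyConst_of_color_change {f g h : ℕ → Fin 2}
    (hfgh : ∀ i k, 0 < i → 0 < k → f i = g k → g k ≠ h (i + k))
    {i : ℕ} (hi : 0 < i) (hchange : f (i + 1) ≠ f i) : EventuallyConst g atTop := by
  have propagate (k : ℕ) (hk : 0 < k) (hgk : g k = f (i + 1)) : g (k + 1) = f (i + 1) := by
    have h_ne : g k ≠ h (i + (k + 1)) := by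
      simpa only [add_assoc, add_comm 1 k] using hfgh (i + 1) k i.succ_pos hk hgk.symm
    have h_ne' := hfgh i (k + 1) hi k.succ_pos
    omega
  rw [eventuallyConst_atTop]
  by_cases hex : ∃ k, 0 < k ∧ g k = f (i + 1)
  · obtain ⟨k, hk, hgk⟩ := hex
    refine ⟨k, fun m hm ↦ ?_⟩
    rw [hgk]
    induction m, hm using Nat.le_induction with
    | base => exact hgk
    | succ m hm ih => exact propagate m (hk.trans_le hm) ih
  · push Not at hex
    refine ⟨1, fun m hm ↦ ?_⟩
    have h_one := hex 1 one_pos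
    have h_m := hex m hm
    omega

theorem exists_eq_add_or_eventuallyConst (f g h : ℕ → Fin 2) :
    (∃ i k, 0 < i ∧ 0 < k ∧ f i = g k ∧ g k = h (i + k)) ∨
      EventuallyConst f atTop ∨ EventuallyConst g atTop := by
  by_contra! ⟨hfgh, hf, hg⟩
  rw [eventuallyConst_atTop_nat] at hf
  push Not at hf
  obtain ⟨i, hi, hchange⟩ := hf 1
  exact hg (eventuallyConst_of_color_change hfgh hi hchange)

theorem hasMonochromaticSolution_ternary (χ : ℕ → Fin 2) {a b c : ℕ}
    (ha : 0 < a) (hb : 0 < b) (hc : 0 < c) :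
    HasMonochromaticSolution χ ![(a : ℤ), b, -c] := by
  have param_pos {i k : ℕ} (hi : 0 < i) (hk : 0 < k) :
      ∀ t, 0 < ![b * c * i, a * c * k, a * b * (i + k)] t := by
    simp [Fin.forall_fin_succ, *]
  have param_sum (i k : ℕ) :
      ∑ t, ![(a : ℤ), b, -c] t * (![b * c * i, a * c * k, a * b * (i + k)] t : ℕ) = 0 := by
    simp only [Fin.sum_univ_three, Matrix.cons_val]
    push_cast
    ring
  rcases exists_eq_add_or_eventuallyConst (fun i ↦ χ (b * c * i)) (fun k ↦ χ (a * c * k))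
      (fun m ↦ χ (a * b * m)) with ⟨i, k, hi, hk, hxy, hyz⟩ | hconst | hconst
  · have color_eq (t : Fin 3) :
        χ (![b * c * i, a * c * k, a * b * (i + k)] t) = χ (a * b * (i + k)) := by
      fin_cases t
      exacts [hxy.trans hyz, hyz, rfl]
    exact ⟨_, param_pos hi hk, param_sum i k, fun s t ↦ (color_eq s).trans (color_eq t).symm⟩
  · exact .of_eventuallyConst (mul_pos hb hc) hconst (param_pos one_pos one_pos) (param_sum 1 1)
  · exact .of_eventuallyConst (mul_pos ha hc) hconst (param_pos one_pos one_pos) (param_sum 1 1)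

section General

variable {ι : Type*} [Fintype ι] {c : ι → ℤ}

theorem hasMonochromaticSolution_of_two_pos (χ : ℕ → Fin 2) {p q r : ι} (hpq : p ≠ q)
    (hp : 0 < c p) (hq : 0 < c q) (hr : c r < 0) : HasMonochromaticSolution χ c := by
  classical
  let f (i : ι) : Fin 3 := if i = p then 0 else if 0 < c i then 1 else 2
  have sum_zero : ∑ i with f i = 0, c i = c p := by
    have fiber_eq : ({i | f i = 0} : Finset ι) = {p} := by
      ext i
      grind
    rw [fiber_eq, sum_singleton]
  have sum_one_pos : 0 < ∑ i with f i = 1, c i :=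
    sum_pos (by grind) ⟨q, by grind⟩
  have sum_two_neg : ∑ i with f i = 2, c i < 0 :=
    sum_neg' (by grind) ⟨r, by grind⟩
  apply HasMonochromaticSolution.of_sum_fiber f
  have hternary := hasMonochromaticSolution_ternary χ (Int.natAbs_pos.2 hp.ne')
    (Int.natAbs_pos.2 sum_one_pos.ne') (Int.natAbs_pos.2 sum_two_neg.ne)
  convert hternary using 1
  ext t
  fin_cases t
  · simpa using sum_zero.trans (abs_of_pos hp).symm
  · simpa using (abs_of_pos sum_one_pos).symm
  · simp [abs_of_neg sum_two_neg]

theorem rado_two_color_general (χ : ℕ → Fin 2) (hcard : 3 ≤ #{i | c i ≠ 0})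
    (hpos : ∃ i, 0 < c i) (hneg : ∃ j, c j < 0) : HasMonochromaticSolution χ c := by
  classical
  obtain ⟨p, hp⟩ := hpos
  obtain ⟨q, hq⟩ := hneg
  obtain ⟨r, hr, hr_new⟩ := exists_mem_notMem_of_card_lt_card (card_le_two.trans_lt hcard :
    #{p, q} < #{i | c i ≠ 0})
  have hr_ne : c r ≠ 0 := (mem_filter.1 hr).2
  obtain ⟨hrp, hrq⟩ : r ≠ p ∧ r ≠ q := by simpa using hr_new
  rcases hr_ne.lt_or_gt with hr_neg | hr_pos
  · apply HasMonochromaticSolution.of_neg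
    exact hasMonochromaticSolution_of_two_pos χ hrq (neg_pos.2 hr_neg) (neg_pos.2 hq)
      (neg_lt_zero.2 hp)
  · exact hasMonochromaticSolution_of_two_pos χ hrp hr_pos hp hq

end General

/-- Rado's two-color theorem: any linear homogeneous equation with at least 3
variables, nonzero integer coefficients, and coefficients of both signs admits,
under every 2-coloring of the positive integers, a monochromatic solution. -/
theorem rado_two_color (n : ℕ) (hn : 3 ≤ n) (c : Fin n → ℤ)
    (hc : ∀ i, c i ≠ 0) (hpos : ∃ i, 0 < c i) (hneg : ∃ j, c j < 0)
    (χ : ℕ → Fin 2) :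
    ∃ x : Fin n → ℕ, (∀ i, 0 < x i) ∧
      (∑ i, c i * (x i : ℤ)) = 0 ∧
      (∀ i j, χ (x i) = χ (x j)) :=
  rado_two_color_general χ (by simpa [hc] using hn) hpos hneg
end

section
/- Let E₀ be the equation c₁x₁ + ⋯ + cₙxₙ = 0 and E₁ be the equation d₁y₁ + ⋯ + dₘyₘ = 0, where n, m ≥ 3, all cᵢ and dⱼ are nonzero integers, and each of the coefficient lists (c₁,…,cₙ) and (d₁,…,dₘ) contains both a positive and a negative entry. Then for every 2-coloring χ : ℤ⁺ → {0,1} there exist either positive integers x₁,…,xₙ with c₁x₁ + ⋯ + cₙxₙ = 0 and χ(x₁) = ⋯ = χ(xₙ) = 0, or positive integers y₁,…,yₘ with d₁y₁ + ⋯ + dₘyₘ = 0 and χ(y₁) = ⋯ = χ(yₘ) = 1. -/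
/-!
Grouping variables by the sign of their coefficient turns each equation into `a x + b y = e z` with
`a, b, e > 0`. If a colouring avoids both equations then, after restricting it to the multiples of a
suitable integer, each colour class is closed under the corresponding weighted mean
`(a x + b y) / (a + b)`.

No colour class `B` then contains a long interval. Otherwise extend the interval downwards inside
`B` until it meets an element `r` of the other class `R`. Since `R` is closed under means, a point
`r + a t` of `B` forces `r + (a + b) t` into `B`; together with means in `B` this extends the
interval upwards forever, and then all multiples of `2 r` lie in `B`, among them a solution of the
equation that `B` avoids.

On the other hand two elements `u`, `u + d` of one class, with `d` suitably dividing `u`, generate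
through iterated means a long progression of multiples of its common difference, i.e. a long
interval after rescaling. Hence such elements have different colours, but there are three integers
any two of which are of this form.
-/

open Finset (univ)
open Set (Icc Ico Ioc Ioi)

section SolutionFree

variable {ι κ : Type*} [Fintype ι] [Fintype κ] {c : ι → ℤ} {S : Set ℤ}

/-- No solution of the linear equation `∑ i, c i * x i = 0` has all its values in `S`. The equation
`a x + b y = e z` is encoded by the coefficients `![a, b, -e]`. -/
def SolutionFree (c : ι → ℤ) (S : Set ℤ) : Prop :=
  ∀ x : ι → ℤ, (∀ i, x i ∈ S) → ∑ i, c i * x i ≠ 0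

theorem SolutionFree.neg (h : SolutionFree c S) : SolutionFree (-c) S := fun x hx hsum =>
  h x hx (by simpa using hsum)

theorem SolutionFree.preimage_mul (h : SolutionFree c S) (k : ℤ) :
    SolutionFree c ((k * ·) ⁻¹' S) := fun x hx hsum =>
  h (fun i => k * x i) hx <| by
    simp only [mul_left_comm _ k, ← Finset.mul_sum, hsum, mul_zero]

theorem SolutionFree.sum_fiber [DecidableEq κ] (h : SolutionFree c S) (f : ι → κ) :
    SolutionFree (fun j => ∑ i with f i = j, c i) S := fun x hx hsum =>
  h (fun i => x (f i)) (fun i => hx (f i)) <| by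
    rw [← hsum, ← Finset.sum_fiberwise univ f]
    refine Finset.sum_congr rfl fun j _ => ?_
    rw [Finset.sum_mul]
    exact Finset.sum_congr rfl fun i hi => by rw [(Finset.mem_filter.mp hi).2]

theorem SolutionFree.ternary_ne {a b e x y z : ℤ} (h : SolutionFree ![a, b, -e] S)
    (hx : x ∈ S) (hy : y ∈ S) (hz : z ∈ S) : a * x + b * y ≠ e * z := fun heq =>
  h ![x, y, z] (by simp [Fin.forall_fin_succ, hx, hy, hz])
    (by simp [Fin.sum_univ_three, heq])

theorem SolutionFree.exists_ternary_of_two_pos (h : SolutionFree c S) {p q l : ι} (hpq : p ≠ q)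
    (hp : 0 < c p) (hq : 0 < c q) (hl : c l < 0) :
    ∃ a b e : ℤ, 0 < a ∧ 0 < b ∧ 0 < e ∧ SolutionFree ![a, b, -e] S := by
  classical
  let f : ι → Fin 3 := fun i => if c i < 0 then 2 else if i = p then 0 else 1
  have fiber_pos : ∀ j ≠ 2, ∀ i, f i = j → 0 < c i → 0 < ∑ i with f i = j, c i := by
    intro j hj i hij hi
    refine Finset.sum_pos' (fun k hk => ?_) ⟨i, by simp [hij], hi⟩
    by_contra! hck
    exact hj (by simpa [f, hck] using (Finset.mem_filter.mp hk).2.symm)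
  have fiber_neg : 0 < -∑ i with f i = 2, c i := by
    rw [← Finset.sum_neg_distrib]
    have neg_of_fiber : ∀ k, f k = 2 → c k < 0 := by
      intro k hk
      by_contra! hck
      by_cases hkp : k = p <;> simp [f, hck.not_gt, hkp, hp.not_gt] at hk
    exact Finset.sum_pos (fun k hk => neg_pos.mpr (neg_of_fiber k (Finset.mem_filter.mp hk).2))
      ⟨l, by simp [f, hl]⟩
  refine ⟨_, _, _, fiber_pos 0 (by decide) p (by simp [f, hp.not_gt]) hp,
    fiber_pos 1 (by decide) q (by simp [f, hq.not_gt, hpq.symm]) hq, fiber_neg, ?_⟩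
  convert h.sum_fiber f using 1
  ext j
  fin_cases j <;> simp

theorem SolutionFree.exists_ternary (h : SolutionFree c S) (hcard : 3 ≤ Fintype.card ι)
    (hc : ∀ i, c i ≠ 0) (hpos : ∃ i, 0 < c i) (hneg : ∃ i, c i < 0) :
    ∃ a b e : ℤ, 0 < a ∧ 0 < b ∧ 0 < e ∧ SolutionFree ![a, b, -e] S := by
  classical
  obtain ⟨p, hp⟩ := hpos
  obtain ⟨l, hl⟩ := hneg
  obtain ⟨q, -, hq⟩ : ∃ q ∈ univ, q ∉ ({p, l} : Finset ι) :=
    Finset.exists_mem_notMem_of_card_lt_card (Finset.card_le_two.trans_lt hcard)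
  obtain ⟨hqp, hql⟩ : q ≠ p ∧ q ≠ l := by simpa using hq
  rcases (hc q).lt_or_gt with hq_neg | hq_pos
  · exact h.neg.exists_ternary_of_two_pos hql.symm (neg_pos.mpr hl) (neg_pos.mpr hq_neg)
      (neg_neg_of_pos hp)
  · exact h.exists_ternary_of_two_pos hqp.symm hp hq_pos hl

end SolutionFree

section TwoColoring

/-- A 2-colouring of the positive integers, given by its two colour classes. -/
structure TwoColoring (R B : Set ℤ) : Prop where
  disjoint : Disjoint R B
  union_eq : R ∪ B = Ioi 0

namespace TwoColoring

variable {R B : Set ℤ}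

theorem symm (h : TwoColoring R B) : TwoColoring B R :=
  ⟨h.disjoint.symm, by rw [Set.union_comm, h.union_eq]⟩

theorem pos_of_mem_left (h : TwoColoring R B) {x : ℤ} (hx : x ∈ R) : 0 < x :=
  h.union_eq.subset (.inl hx)

theorem mem_right_iff (h : TwoColoring R B) {x : ℤ} (hx : 0 < x) : x ∈ B ↔ x ∉ R :=
  ⟨fun hB hR => Set.disjoint_left.mp h.disjoint hR hB,
    (h.union_eq.superset hx : x ∈ R ∨ x ∈ B).resolve_left⟩

theorem preimage_mul (h : TwoColoring R B) {k : ℤ} (hk : 0 < k) :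
    TwoColoring ((k * ·) ⁻¹' R) ((k * ·) ⁻¹' B) where
  disjoint := h.disjoint.preimage _
  union_eq := by
    rw [← Set.preimage_union, h.union_eq]
    ext x
    exact mul_pos_iff_of_pos_left hk

end TwoColoring

end TwoColoring

section MeanClosed

variable {a b : ℤ} {S : Set ℤ}

/-- `S` contains every integer that is the mean of two of its elements with weights `a : b`. -/
def MeanClosed (a b : ℤ) (S : Set ℤ) : Prop :=
  ∀ ⦃x⦄, x ∈ S → ∀ ⦃y⦄, y ∈ S → ∀ ⦃z⦄, (a + b) * z = a * x + b * y → z ∈ S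

theorem MeanClosed.preimage_mul (h : MeanClosed a b S) (k : ℤ) :
    MeanClosed a b ((k * ·) ⁻¹' S) := fun _ hx _ hy _ hz =>
  h hx hy (by linear_combination k * hz)

theorem MeanClosed.exists_isCoprime (h : MeanClosed a b S) (ha : 0 < a) (hb : 0 < b) :
    ∃ u v : ℤ, 0 < u ∧ 0 < v ∧ IsCoprime u v ∧ MeanClosed u v S := by
  have hg : 0 < a.gcd b := Int.gcd_pos_of_ne_zero_left b ha.ne'
  obtain ⟨u, v, huv, hu, hv⟩ := Int.exists_gcd_one hg
  refine ⟨u, v, pos_of_mul_pos_left (hu ▸ ha) (by positivity),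
    pos_of_mul_pos_left (hv ▸ hb) (by positivity), Int.isCoprime_iff_gcd_eq_one.mpr huv,
    fun x hx y hy z hz => h hx hy ?_⟩
  linear_combination (a.gcd b : ℤ) * hz + (z - x) * hu + (z - y) * hv

-- If `i = q + q'` then `U + E X a b i` is the mean of `U + E (a + b) b X q'` and
-- `U + E (a + b) a X q`, which are means of `U` and terms of a progression of half the length.
theorem MeanClosed.exists_progression (h : MeanClosed a b S) (ha : 0 < a) (hb : 0 < b) (n : ℕ) :
    ∃ N X : ℤ, 0 < N ∧ 0 < X ∧ ∀ U E : ℤ, U ∈ S → U + E * N ∈ S →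
      ∀ i ∈ Icc (0 : ℤ) (n + 1), U + E * X * i ∈ S := by
  induction n with
  | zero =>
    refine ⟨1, 1, one_pos, one_pos, fun U E hU hV i ⟨hi_nonneg, hi_le⟩ => ?_⟩
    obtain rfl | rfl : i = 0 ∨ i = 1 := by omega
    · simpa using hU
    · simpa using hV
  | succ n ih =>
    obtain ⟨N, X, hN, hX, hprog⟩ := ih
    refine ⟨(a + b) ^ 2 * N, a * b * X, by positivity, by positivity,
      fun U E hU hV i ⟨hi_nonneg, hi_le⟩ => ?_⟩
    push_cast at hi_le
    obtain ⟨q, q', rfl, hq, hq'⟩ :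
        ∃ q q', q + q' = i ∧ q ∈ Icc (0 : ℤ) (n + 1) ∧ q' ∈ Icc (0 : ℤ) (n + 1) :=
      ⟨i / 2, i - i / 2, by omega, ⟨by omega, by omega⟩, ⟨by omega, by omega⟩⟩
    have hterm := hprog U (E * (a + b) ^ 2) hU (by rwa [mul_assoc])
    have left : U + E * (a + b) * a * X * q ∈ S := h (hterm q hq) hU (by ring)
    have right : U + E * (a + b) * b * X * q' ∈ S := h hU (hterm q' hq') (by ring)
    exact h right left (by ring)

end MeanClosed

section Reduction

variable {R B : Set ℤ} {a b e a' b' e' : ℤ}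

theorem TwoColoring.add_mul_mem_right_of_mul_mem (hRB : TwoColoring R B)
    (hR : SolutionFree ![a, b, -e] R) (hab : 0 < a + b) {t : ℤ} (ht : 0 < t) (h : e * t ∈ R) :
    (a + b) * t ∈ B :=
  (hRB.mem_right_iff (mul_pos hab ht)).mpr fun h' => hR.ternary_ne h h h' (by ring)

theorem TwoColoring.mul_mem_right_of_add_mul_mem (hRB : TwoColoring R B)
    (hR : SolutionFree ![a, b, -e] R) (he : 0 < e) {t : ℤ} (ht : 0 < t) (h : (a + b) * t ∈ R) :
    e * t ∈ B :=
  (hRB.mem_right_iff (mul_pos he ht)).mpr fun h' => hR.ternary_ne h' h' h (by ring)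

theorem TwoColoring.meanClosed_preimage_mul (hRB : TwoColoring R B)
    (hR : SolutionFree ![a, b, -e] R) (hB : SolutionFree ![a', b', -e'] B)
    (ha : 0 < a) (hb : 0 < b) (he : 0 < e) (hab' : 0 < a' + b') (he' : 0 < e') :
    MeanClosed a b ((e * e' * (a + b) * (a' + b') * ·) ⁻¹' R) := by
  intro x hx y hy z hz
  set g := a + b
  set g' := a' + b'
  have hg_pos : 0 < g := add_pos ha hb
  have hN : 0 < e * e' * g * g' := by positivity
  have hx_pos : 0 < x := (hRB.preimage_mul hN).pos_of_mem_left hx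
  have hy_pos : 0 < y := (hRB.preimage_mul hN).pos_of_mem_left hy
  have hz_pos : 0 < z :=
    pos_of_mul_pos_right (hz.symm ▸ by positivity : 0 < g * z) hg_pos.le
  -- Four multiples of `z` receive alternating colours.
  have multiple₁_mem_B : g' * (e' * g ^ 2 * z) ∈ B :=
    (hRB.mem_right_iff (by positivity)).mpr fun h =>
      hR.ternary_ne hx hy h (by linear_combination (-(e * e' * g * g')) * hz)
  have multiple₂_mem_R : e' * (e' * g ^ 2 * z) ∈ R :=
    hRB.symm.mul_mem_right_of_add_mul_mem hB he' (by positivity) multiple₁_mem_B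
  have multiple₃_mem_B : e * (e' ^ 2 * g * z) ∈ B :=
    hRB.mul_mem_right_of_add_mul_mem hR he (t := e' ^ 2 * g * z) (by positivity)
      (by convert multiple₂_mem_R using 1; ring)
  have multiple₄_mem_R : g' * (e * e' * g * z) ∈ R :=
    hRB.symm.add_mul_mem_right_of_mul_mem hB hab' (by positivity)
      (by convert multiple₃_mem_B using 1; ring)
  change e * e' * g * g' * z ∈ R
  convert multiple₄_mem_R using 1
  ring

end Reduction

section Intervals

variable {R B : Set ℤ} {a b a' b' T n : ℤ}

/-- `S` contains no dilate `{k, 2 k, …, T k}` with `k > 0`. Avoiding a ternary equation is used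
in this form, for a suitable `T`, once the set is known to be closed under weighted means. -/
def DilateFree (T : ℤ) (S : Set ℤ) : Prop :=
  ∀ k : ℤ, 0 < k → ∃ i ∈ Icc 1 T, k * i ∉ S

theorem DilateFree.preimage_mul (h : DilateFree T B) {k : ℤ} (hk : 0 < k) :
    DilateFree T ((k * ·) ⁻¹' B) := fun l hl => by
  simpa only [Set.mem_preimage, mul_assoc] using h (k * l) (mul_pos hk hl)

theorem SolutionFree.dilateFree {e : ℤ} (h : SolutionFree ![a, b, -e] B) (hab : 0 < a + b)
    (he : 0 < e) : DilateFree (a + b + e) B := by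
  intro k _
  by_contra! hmem
  have he_mem : k * e ∈ B := hmem e ⟨by omega, by omega⟩
  have hab_mem : k * (a + b) ∈ B := hmem (a + b) ⟨by omega, by omega⟩
  exact h.ternary_ne he_mem he_mem hab_mem (by ring)

theorem exists_dvd_add_mul_add_mul {p q g : ℤ} (hpq : IsCoprime p q) (hg : 0 < g) (N s₀ t₀ : ℤ) :
    ∃ s ∈ Ico s₀ (s₀ + g), ∃ t ∈ Ico t₀ (t₀ + g), g ∣ N + p * s + q * t := by
  obtain ⟨x, y, hxy⟩ := hpq
  refine ⟨_, toIcoMod_mem_Ico hg s₀ (-N * x), _, toIcoMod_mem_Ico hg t₀ (-N * y),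
    -p * toIcoDiv hg s₀ (-N * x) - q * toIcoDiv hg t₀ (-N * y), ?_⟩
  simp only [toIcoMod, smul_eq_mul]
  linear_combination -N * hxy

theorem TwoColoring.reflect_mem_right (hRB : TwoColoring R B) (hR : MeanClosed a b R)
    (hab : 0 < a + b) {r t : ℤ} (ht : 0 < t) (hr : r ∈ R) (h : r + a * t ∈ B) :
    r + (a + b) * t ∈ B := by
  have hr_pos := hRB.pos_of_mem_left hr
  refine (hRB.mem_right_iff (by positivity)).mpr fun h' => ?_
  exact Set.disjoint_left.mp hRB.disjoint (hR h' hr (by ring)) h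

variable (hRB : TwoColoring R B) (hR : MeanClosed a b R) (hB : MeanClosed a' b' B)
    (ha : 0 < a) (hb : 0 < b) (ha' : 0 < a') (hb' : 0 < b') (hcop : IsCoprime a' b')

include hRB hR hB ha hb ha' hb' hcop

-- With `N = n + 1`, the point `r + N` is a mean of `r + N - a' s` and `r + N + b' s`, and the
-- latter is a mean of `r + N + b' s - b' t` and `r + N + b' s + a' t`. Choosing `s < t` such that
-- `a + b` divides `N + b' s + a' t`, the last point is reached by reflection, while `r + N - a' s`
-- and `r + N + b' s - b' t` lie in the given interval.
theorem TwoColoring.add_one_mem_right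
    (hn : a * (3 * (a + b) * (a' + b') + 1) ≤ n) {r : ℤ} (hr : r ∈ R)
    (hrun : Ioc r (r + n) ⊆ B) : r + n + 1 ∈ B := by
  set g := a + b with hg
  have hg_pos : 0 < g := add_pos ha hb
  obtain ⟨s, ⟨hs_ge, hs_lt⟩, t, ⟨ht_ge, ht_lt⟩, i, hi⟩ :=
    exists_dvd_add_mul_add_mul hcop.symm hg_pos (n + 1) g (2 * g)
  have hs_pos : 0 < s := by omega
  have ht_pos : 0 < t := by omega
  have hn_ge : 3 * g * (a' + b') + 1 ≤ n :=
    (le_mul_of_one_le_left (by positivity) ha).trans hn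
  have hn_pos : 0 < n := lt_of_lt_of_le (by positivity) hn_ge
  have hi_pos : 0 < i := pos_of_mul_pos_right (hi ▸ by positivity : 0 < g * i) hg_pos.le
  have hai_le : a * i ≤ n := by
    refine le_of_mul_le_mul_left ?_ hg_pos
    calc g * (a * i) = a * (n + 1 + b' * s + a' * t) := by rw [hi]; ring
      _ ≤ a * (n + 1 + b' * (3 * g) + a' * (3 * g)) := by gcongr <;> omega
      _ = a * n + a * (3 * g * (a' + b') + 1) := by ring
      _ ≤ a * n + 1 * n := by rw [one_mul]; gcongr
      _ ≤ a * n + b * n := by gcongr; omega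
      _ = g * n := by rw [hg]; ring
  have reflected : r + g * i ∈ B :=
    hRB.reflect_mem_right hR hg_pos hi_pos hr (hrun ⟨by nlinarith, by omega⟩)
  have above : r + n + 1 + b' * s ∈ B := by
    have hmem : r + n + 1 + b' * s - b' * t ∈ B := hrun ⟨by nlinarith, by nlinarith⟩
    exact hB hmem reflected (by rw [← hi]; ring)
  have below : r + n + 1 - a' * s ∈ B := hrun ⟨by nlinarith, by nlinarith⟩
  exact hB above below (by ring)

theorem TwoColoring.Ioi_subset_right
    (hn : a * (3 * (a + b) * (a' + b') + 1) ≤ n) {r : ℤ} (hr : r ∈ R)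
    (hrun : Ioc r (r + n) ⊆ B) : Ioi r ⊆ B := by
  have extended : ∀ m, n ≤ m → Ioc r (r + m) ⊆ B := by
    intro m hm
    induction m, hm using Int.leInduction with
    | base => exact hrun
    | succ m hm ih =>
      intro x ⟨hrx, hxm⟩
      rcases hxm.eq_or_lt with rfl | hlt
      · rw [← add_assoc]
        exact hRB.add_one_mem_right hR hB ha hb ha' hb' hcop (hn.trans hm) hr ih
      · exact ih ⟨hrx, by omega⟩
  exact fun x hx => extended (max n (x - r)) (le_max_left _ _) ⟨hx, by omega⟩

theorem TwoColoring.not_Ioc_subset_right (hBT : DilateFree T B)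
    (hn : a * (3 * (a + b) * (a' + b') + 1) ≤ n) (hT : T ≤ n) {t : ℤ} (ht : 0 ≤ t) :
    ¬ Ioc t (t + n) ⊆ B := by
  induction t, ht using Int.leInduction generalizing n with
  | base =>
    intro hrun
    obtain ⟨i, ⟨hi_ge, hi_le⟩, hi⟩ := hBT 1 one_pos
    exact hi (hrun ⟨by omega, by omega⟩)
  | succ t ht ih =>
    intro hrun
    by_cases hmem : t + 1 ∈ B
    · refine ih (n := n + 1) (by omega) (by omega) fun x ⟨htx, hxn⟩ => ?_
      rcases (show t + 1 ≤ x from htx).eq_or_lt with rfl | hlt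
      · exact hmem
      · exact hrun ⟨hlt, by omega⟩
    · have hr : t + 1 ∈ R := (hRB.symm.mem_right_iff (by omega)).mpr hmem
      have tail := hRB.Ioi_subset_right hR hB ha hb ha' hb' hcop hn hr hrun
      obtain ⟨i, ⟨hi_ge, -⟩, hi⟩ := hBT (2 * (t + 1)) (by omega)
      exact hi (tail (show t + 1 < 2 * (t + 1) * i by nlinarith))

theorem TwoColoring.exists_forall_not_both_mem_right (hBT : DilateFree T B) :
    ∃ N X : ℤ, 0 < N ∧ 0 < X ∧ ∀ k d u : ℤ, 0 < k → 0 < d → 0 < u → X * d ∣ u →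
      ¬ (k * N * u ∈ B ∧ k * N * (u + d) ∈ B) := by
  obtain ⟨n, hn⟩ : ∃ n : ℕ, max (a * (3 * (a + b) * (a' + b') + 1)) T ≤ n :=
    ⟨_, Int.self_le_toNat _⟩
  obtain ⟨N, X, hN, hX, hprog⟩ := hB.exists_progression ha' hb' n
  refine ⟨N, X, hN, hX, fun k d u hk hd hu ⟨v, hv⟩ ⟨hu_mem, hud_mem⟩ => ?_⟩
  have hv_pos : 0 < v := pos_of_mul_pos_right (hv ▸ hu) (by positivity)
  have hD : 0 < k * d * X := by positivity
  refine (hRB.preimage_mul hD).not_Ioc_subset_right (hR.preimage_mul _) (hB.preimage_mul _)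
    ha hb ha' hb' hcop (hBT.preimage_mul hD) ((le_max_left _ _).trans hn)
    ((le_max_right _ _).trans hn) (t := N * v) (by positivity) fun x ⟨hx_gt, hx_le⟩ => ?_
  have hmem := hprog (k * N * u) (k * d) hu_mem (by convert hud_mem using 1; ring)
    (x - N * v) ⟨by omega, by omega⟩
  change k * d * X * x ∈ B
  convert hmem using 1
  rw [hv]
  ring

end Intervals

section Contradiction

variable {R B : Set ℤ} {a b e a' b' e' T T' : ℤ}

theorem TwoColoring.false_of_meanClosed (hRB : TwoColoring R B)
    (hR : MeanClosed a b R) (hB : MeanClosed a' b' B)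
    (hRT : DilateFree T R) (hBT : DilateFree T' B)
    (ha : 0 < a) (hb : 0 < b) (ha' : 0 < a') (hb' : 0 < b')
    (hcop : IsCoprime a b) (hcop' : IsCoprime a' b') : False := by
  obtain ⟨N, X, hN, hX, notB⟩ :=
    hRB.exists_forall_not_both_mem_right hR hB ha hb ha' hb' hcop' hBT
  obtain ⟨N', X', hN', hX', notR⟩ :=
    hRB.symm.exists_forall_not_both_mem_right hB hR ha' hb' ha hb hcop hRT
  obtain ⟨Y, hY⟩ : ∃ Y, Y = X * X' := ⟨_, rfl⟩
  have hY_pos : 0 < Y := hY ▸ mul_pos hX hX'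
  have opposite : ∀ u d, 0 < u → 0 < d → Y * d ∣ u →
      (N * N' * (u + d) ∈ B ↔ N * N' * u ∉ B) := by
    intro u d hu hd hdvd
    have hXd : X * d ∣ u := .trans ⟨X', by rw [hY]; ring⟩ hdvd
    have hX'd : X' * d ∣ u := .trans ⟨X, by rw [hY]; ring⟩ hdvd
    refine ⟨fun hud_mem hu_mem => notB N' d u hN' hd hu hXd ?_, fun hu_mem => ?_⟩
    · simpa only [mul_comm N'] using And.intro hu_mem hud_mem
    · by_contra hud_mem
      rw [← hRB.symm.mem_right_iff (by positivity)] at hu_mem hud_mem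
      exact notR N d u hN hd hu hX'd ⟨hu_mem, hud_mem⟩
  -- Any two of `u`, `u + Y` and `u + Y + 1` differ by some `d` with `Y * d` dividing the smaller.
  let u := Y ^ 2 * (Y + 1)
  have hu : 0 < u := by positivity
  have u_vs_add_Y := opposite u Y hu hY_pos ⟨Y + 1, by ring⟩
  have u_vs_add_Y_add_one := opposite u (Y + 1) hu (by positivity) ⟨Y, by ring⟩
  have add_Y_vs_add_Y_add_one := opposite (u + Y) 1
    (by positivity) one_pos ⟨Y * (Y + 1) + 1, by ring⟩
  rw [← add_assoc] at u_vs_add_Y_add_one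
  tauto

theorem TwoColoring.not_solutionFree_ternary (hRB : TwoColoring R B)
    (hR : SolutionFree ![a, b, -e] R) (ha : 0 < a) (hb : 0 < b) (he : 0 < e)
    (ha' : 0 < a') (hb' : 0 < b') (he' : 0 < e') : ¬ SolutionFree ![a', b', -e'] B := by
  intro hB
  have hN : 0 < e * e' * (a + b) * (a' + b') := by positivity
  have hRmean := hRB.meanClosed_preimage_mul hR hB ha hb he (by positivity) he'
  have hBmean := hRB.symm.meanClosed_preimage_mul hB hR ha' hb' he' (by positivity) he
  rw [show e' * e * (a' + b') * (a + b) = e * e' * (a + b) * (a' + b') by ring] at hBmean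
  obtain ⟨u, v, hu, hv, huv, hRmean⟩ := hRmean.exists_isCoprime ha hb
  obtain ⟨u', v', hu', hv', huv', hBmean⟩ := hBmean.exists_isCoprime ha' hb'
  exact (hRB.preimage_mul hN).false_of_meanClosed hRmean hBmean
    ((hR.preimage_mul _).dilateFree (by positivity) he)
    ((hB.preimage_mul _).dilateFree (by positivity) he') hu hv hu' hv' huv huv'

theorem TwoColoring.not_solutionFree {ι κ : Type*} [Fintype ι] [Fintype κ]
    (hRB : TwoColoring R B) {c : ι → ℤ} {d : κ → ℤ}
    (hι : 3 ≤ Fintype.card ι) (hκ : 3 ≤ Fintype.card κ)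
    (hc : ∀ i, c i ≠ 0) (hd : ∀ j, d j ≠ 0)
    (hcpos : ∃ i, 0 < c i) (hcneg : ∃ i, c i < 0)
    (hdpos : ∃ j, 0 < d j) (hdneg : ∃ j, d j < 0)
    (hR : SolutionFree c R) : ¬ SolutionFree d B := by
  intro hB
  obtain ⟨a, b, e, ha, hb, he, hR₃⟩ := hR.exists_ternary hι hc hcpos hcneg
  obtain ⟨a', b', e', ha', hb', he', hB₃⟩ := hB.exists_ternary hκ hd hdpos hdneg
  exact hRB.not_solutionFree_ternary hR₃ ha hb he ha' hb' he' hB₃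

end Contradiction

section ColorClass

variable {C : Type*}

/-- The positive integers of colour `i`, as a set of integers. -/
def colorClass (χ : ℕ → C) (i : C) : Set ℤ :=
  {x | 0 < x ∧ χ x.toNat = i}

theorem twoColoring_colorClass (χ : ℕ → Fin 2) :
    TwoColoring (colorClass χ 0) (colorClass χ 1) where
  disjoint := Set.disjoint_left.mpr fun _ h₀ h₁ => zero_ne_one (h₀.2.symm.trans h₁.2)
  union_eq := by
    ext x
    have hcases : χ x.toNat = 0 ∨ χ x.toNat = 1 := by omega
    simp only [colorClass, Set.mem_union, Set.mem_ofPred_eq, Set.mem_Ioi, ← and_or_left, hcases,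
      and_true]

theorem exists_nat_solution_of_not_solutionFree {ι : Type*} [Fintype ι] {c : ι → ℤ} {χ : ℕ → C}
    {i : C} (h : ¬ SolutionFree c (colorClass χ i)) :
    ∃ x : ι → ℕ, (∀ k, 0 < x k) ∧ ∑ k, c k * (x k : ℤ) = 0 ∧ ∀ k, χ (x k) = i := by
  simp only [SolutionFree, not_forall, not_not] at h
  obtain ⟨x, hx, hsum⟩ := h
  refine ⟨fun k => (x k).toNat, fun k => Int.pos_iff_toNat_pos.mp (hx k).1, ?_, fun k => (hx k).2⟩
  simpa only [Int.toNat_of_nonneg (hx _).1.le] using hsum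

end ColorClass

/-- Off-diagonal version of Rado's two-color theorem: for two linear homogeneous
equations, each with at least 3 variables, nonzero integer coefficients, and
coefficients of both signs, every 2-coloring of the positive integers admits a
solution to the first equation monochromatic of color 0 or a solution to the
second equation monochromatic of color 1. -/
theorem off_diagonal_rado_existence (n m : ℕ) (hn : 3 ≤ n) (hm : 3 ≤ m)
    (c : Fin n → ℤ) (d : Fin m → ℤ)
    (hc : ∀ i, c i ≠ 0) (hd : ∀ j, d j ≠ 0)
    (hcpos : ∃ i, 0 < c i) (hcneg : ∃ i, c i < 0)
    (hdpos : ∃ j, 0 < d j) (hdneg : ∃ j, d j < 0)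
    (χ : ℕ → Fin 2) :
    (∃ x : Fin n → ℕ, (∀ i, 0 < x i) ∧
      (∑ i, c i * (x i : ℤ)) = 0 ∧ (∀ i, χ (x i) = 0)) ∨
    (∃ y : Fin m → ℕ, (∀ j, 0 < y j) ∧
      (∑ j, d j * (y j : ℤ)) = 0 ∧ (∀ j, χ (y j) = 1)) := by
  refine or_iff_not_imp_left.mpr fun no_solution₀ => exists_nat_solution_of_not_solutionFree ?_
  have free₀ : SolutionFree c (colorClass χ 0) :=
    not_imp_comm.mp exists_nat_solution_of_not_solutionFree no_solution₀
  exact (twoColoring_colorClass χ).not_solutionFree (by rwa [Fintype.card_fin])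
    (by rwa [Fintype.card_fin]) hc hd hcpos hcneg hdpos hdneg free₀
end

section
/- For all integers q ≥ s ≥ 2, RR_1(q,s) = (q+1)(s+1) + s. That is, (q+1)(s+1)+s is the least positive integer N such that every 2-coloring χ of {1,…,N} admits x, y, z ∈ {1,…,N} with x + qy = z and χ(x) = χ(y) = χ(z) = 0, or x, y, z ∈ {1,…,N} with x + sy = z and χ(x) = χ(y) = χ(z) = 1. -/
/-!
For the upper bound, write `A` for the class of color `0`. A solution two of whose entries share the
color it must avoid forces the other color on its third entry; propagate this from the color of `1`.
If `1 ∈ A`, this forces `2 ∉ A` and `3 ∈ A`, hence `q + 3 ∉ A`, whereas `q - s + 1 ∉ A`, forced as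
well, yields `q + 3 ∈ A`. If `1 ∉ A`, it forces `2 ∈ A` and `s ∉ A`, which excludes `s = 2`; for
`s ≥ 3` one chain forces `4 ∈ A` and another `4 ∉ A`.

For the lower bound, `A = [s + 1, (q + 1)(s + 1))` avoids both equations below `(q + 1)(s + 1) + s`.
-/

/-- The equation `x + k * y = z` has a solution in `{1, …, N}` with all entries in `A`. -/
def HasSolution (k N : ℕ) (A : Set ℕ) : Prop :=
  ∃ x y z : ℕ, x ∈ Finset.Icc 1 N ∧ y ∈ Finset.Icc 1 N ∧ z ∈ Finset.Icc 1 N ∧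
    x + k * y = z ∧ x ∈ A ∧ y ∈ A ∧ z ∈ A

/-- The 2-coloring of `{1, …, N}` with color classes `A` (color `0`) and `Aᶜ` (color `1`) is a
witness for `N < RR_1(q, s)`. Membership in `A` of numbers outside `{1, …, N}` is irrelevant. -/
def IsAvoiding (q s N : ℕ) (A : Set ℕ) : Prop :=
  ¬ HasSolution q N A ∧ ¬ HasSolution s N Aᶜ

theorem forall_fin_two_coloring_iff {α : Type*} {P : Set α → Set α → Prop} :
    (∀ χ : α → Fin 2, P (χ ⁻¹' {0}) (χ ⁻¹' {1})) ↔ ∀ A : Set α, P A Aᶜ := by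
  classical
  constructor
  · intro h A
    convert h (fun a => if a ∈ A then 0 else 1) using 1 <;> ext a <;> simp
  · intro h χ
    convert h (χ ⁻¹' {0}) using 1
    ext a
    change χ a = 1 ↔ χ a ≠ 0
    omega

theorem forall_coloring_hasSolution_iff {q s N : ℕ} :
    (∀ χ : ℕ → Fin 2, HasSolution q N (χ ⁻¹' {0}) ∨ HasSolution s N (χ ⁻¹' {1})) ↔
      ∀ A : Set ℕ, ¬ IsAvoiding q s N A := by
  rw [forall_fin_two_coloring_iff (P := fun A B => HasSolution q N A ∨ HasSolution s N B)]
  refine forall_congr' fun A => ?_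
  rw [IsAvoiding, ← not_or, not_not]

theorem HasSolution.of_add_mul_eq {k N x y z : ℕ} {A : Set ℕ} (hk : 0 < k)
    (eqn : x + k * y = z) (x_pos : 0 < x) (y_pos : 0 < y) (z_le : z ≤ N)
    (hx : x ∈ A) (hy : y ∈ A) (hz : z ∈ A) : HasSolution k N A := by
  have y_le : y ≤ k * y := Nat.le_mul_of_pos_left y hk
  exact ⟨x, y, z, by grind, by grind, by grind, eqn, hx, hy, hz⟩

theorem not_hasSolution_Ico (k N a : ℕ) : ¬ HasSolution k N (Set.Ico a ((k + 1) * a)) := by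
  rintro ⟨x, y, z, -, -, -, rfl, ⟨hx, -⟩, ⟨hy, -⟩, -, hz⟩
  have : k * a ≤ k * y := Nat.mul_le_mul_left k hy
  linarith

theorem not_hasSolution_compl_Ico {k N a b : ℕ} (ha : a ≤ k + 1) (hab : (k + 1) * a < b + k + 1)
    (hN : N < b + k) : ¬ HasSolution k N (Set.Ico a b)ᶜ := by
  rintro ⟨x, y, z, x_mem, y_mem, z_mem, rfl, hx, hy, hz⟩
  simp only [Finset.mem_Icc] at x_mem y_mem z_mem
  simp only [Set.mem_compl_iff, Set.mem_Ico, not_and, not_lt] at hx hy hz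
  have k_le : k ≤ k * y := Nat.le_mul_of_pos_right k y_mem.1
  have x_lt : x < a := by
    by_contra! hax
    linarith [hx hax]
  have y_lt : y < a := by
    by_contra! hay
    have b_le : k * b ≤ k * y := Nat.mul_le_mul_left k (hy hay)
    have add_le : b + k ≤ 1 + k * b := by nlinarith
    linarith
  have : k * (y + 1) ≤ k * a := Nat.mul_le_mul_left k y_lt
  linarith [hz (by linarith)]

theorem isAvoiding_Ico {q s N : ℕ} (hqs : s ≤ q) (hN : N < (q + 1) * (s + 1) + s) :
    IsAvoiding q s N (Set.Ico (s + 1) ((q + 1) * (s + 1))) :=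
  ⟨not_hasSolution_Ico q N (s + 1), not_hasSolution_compl_Ico le_rfl (by nlinarith) hN⟩

namespace IsAvoiding

section Forcing

variable {q s N x y z : ℕ} {A : Set ℕ}

theorem false_of_mem (h : IsAvoiding q s N A) (eqn : x + q * y = z)
    (hx : x ∈ A) (hy : y ∈ A) (hz : z ∈ A) (hq : 0 < q := by omega) (x_pos : 0 < x := by positivity)
    (y_pos : 0 < y := by positivity) (z_le : z ≤ N := by nlinarith) : False :=
  h.1 (.of_add_mul_eq hq eqn x_pos y_pos z_le hx hy hz)

theorem false_of_notMem (h : IsAvoiding q s N A) (eqn : x + s * y = z)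
    (hx : x ∉ A) (hy : y ∉ A) (hz : z ∉ A) (hs : 0 < s := by omega) (x_pos : 0 < x := by positivity)
    (y_pos : 0 < y := by positivity) (z_le : z ≤ N := by nlinarith) : False :=
  h.2 (.of_add_mul_eq hs eqn x_pos y_pos z_le hx hy hz)

end Forcing

variable {q s : ℕ} {A : Set ℕ}

theorem left_add_one_notMem_of_one_mem (h : IsAvoiding q s ((q + 1) * (s + 1) + s) A)
    (hq : 0 < q) (one_mem : 1 ∈ A) : q + 1 ∉ A := fun mem =>
  h.false_of_mem (by ring : 1 + q * 1 = q + 1) one_mem one_mem mem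

theorem right_add_one_notMem_of_one_mem (h : IsAvoiding q s ((q + 1) * (s + 1) + s) A)
    (hq : 0 < q) (hs : 0 < s) (one_mem : 1 ∈ A) : s + 1 ∉ A := by
  have q_add_one := h.left_add_one_notMem_of_one_mem hq one_mem
  have mul_mem : (q + 1) * (s + 1) ∈ A := by_contra fun notMem =>
    h.false_of_notMem (by ring : (q + 1) + s * (q + 1) = (q + 1) * (s + 1))
      q_add_one q_add_one notMem
  exact fun mem => h.false_of_mem (by ring : (s + 1) + q * (s + 1) = (q + 1) * (s + 1))
    mem mem mul_mem

theorem top_notMem_of_one_mem (h : IsAvoiding q s ((q + 1) * (s + 1) + s) A)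
    (hq : 0 < q) (hs : 0 < s) (one_mem : 1 ∈ A) : (q + 1) * (s + 1) + s ∉ A := by
  have mem : q * s + 2 * s + 1 ∈ A := by_contra fun notMem =>
    h.false_of_notMem (by ring : (s + 1) + s * (q + 1) = q * s + 2 * s + 1)
      (h.right_add_one_notMem_of_one_mem hq hs one_mem)
      (h.left_add_one_notMem_of_one_mem hq one_mem) notMem
  exact h.false_of_mem (by ring : (q * s + 2 * s + 1) + q * 1 = (q + 1) * (s + 1) + s) mem one_mem

theorem two_notMem_of_one_mem (h : IsAvoiding q s ((q + 1) * (s + 1) + s) A)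
    (hq : 0 < q) (hs : 0 < s) (one_mem : 1 ∈ A) : 2 ∉ A := by
  have q_add_two : q + 2 ∈ A := by_contra fun notMem =>
    h.false_of_notMem (by ring : (q + 1) + s * (q + 2) = (q + 1) * (s + 1) + s)
      (h.left_add_one_notMem_of_one_mem hq one_mem) notMem (h.top_notMem_of_one_mem hq hs one_mem)
  exact fun mem => h.false_of_mem (by ring : 2 + q * 1 = q + 2) mem one_mem q_add_two

theorem three_mem_of_one_mem (h : IsAvoiding q s ((q + 1) * (s + 1) + s) A)
    (hq : 0 < q) (hs : 0 < s) (one_mem : 1 ∈ A) : 3 ∈ A := by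
  have mem : 3 * s + 1 ∈ A := by_contra fun notMem =>
    h.false_of_notMem (by ring : (s + 1) + s * 2 = 3 * s + 1)
      (h.right_add_one_notMem_of_one_mem hq hs one_mem)
      (h.two_notMem_of_one_mem hq hs one_mem) notMem
  have add_notMem : q + 3 * s + 1 ∉ A :=
    h.false_of_mem (by ring : (3 * s + 1) + q * 1 = q + 3 * s + 1) mem one_mem
  exact by_contra fun notMem =>
    h.false_of_notMem (by ring : (q + 1) + s * 3 = q + 3 * s + 1)
      (h.left_add_one_notMem_of_one_mem hq one_mem) notMem add_notMem

theorem left_sub_right_add_one_notMem_of_one_mem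
    (h : IsAvoiding q s ((q + 1) * (s + 1) + s) A) (hs : 0 < s) (hqs : s ≤ q) (one_mem : 1 ∈ A) :
    q - s + 1 ∉ A := by
  have hq : 0 < q := hs.trans_le hqs
  have add_mem : q + s + 1 ∈ A := by_contra fun notMem =>
    h.false_of_notMem (by ring : (q + s + 1) + s * (q + 1) = (q + 1) * (s + 1) + s)
      notMem (h.left_add_one_notMem_of_one_mem hq one_mem) (h.top_notMem_of_one_mem hq hs one_mem)
  have two_mul_add_notMem : 2 * q + s + 1 ∉ A :=
    h.false_of_mem (by ring : (q + s + 1) + q * 1 = 2 * q + s + 1) add_mem one_mem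
  have sub_mem : (q - s + 1) + q ∈ A := by_contra fun notMem =>
    h.false_of_notMem (by omega : (q - s + 1 + q) + s * 2 = 2 * q + s + 1)
      notMem (h.two_notMem_of_one_mem hq hs one_mem) two_mul_add_notMem
  have sub_le : q - s ≤ q := Nat.sub_le q s
  exact fun mem =>
    h.false_of_mem (by ring : (q - s + 1) + q * 1 = (q - s + 1) + q) mem one_mem sub_mem

theorem one_notMem (h : IsAvoiding q s ((q + 1) * (s + 1) + s) A) (hs : 0 < s) (hqs : s ≤ q) :
    1 ∉ A := by
  intro one_mem
  have hq : 0 < q := hs.trans_le hqs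
  have q_add_three : q + 3 ∉ A :=
    h.false_of_mem (by ring : 3 + q * 1 = q + 3) (h.three_mem_of_one_mem hq hs one_mem) one_mem
  have eqn : (q - s + 1) + s * (q + 3) = (q + 1) * (s + 1) + s := by
    zify [hqs]
    ring
  exact h.false_of_notMem eqn (h.left_sub_right_add_one_notMem_of_one_mem hs hqs one_mem)
    q_add_three (h.top_notMem_of_one_mem hq hs one_mem)

theorem right_add_one_mem_of_one_notMem (h : IsAvoiding q s ((q + 1) * (s + 1) + s) A)
    (hs : 0 < s) (one_notMem : 1 ∉ A) : s + 1 ∈ A := by_contra fun notMem =>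
  h.false_of_notMem (by ring : 1 + s * 1 = s + 1) one_notMem one_notMem notMem

theorem mul_notMem_of_one_notMem (h : IsAvoiding q s ((q + 1) * (s + 1) + s) A)
    (hq : 0 < q) (hs : 0 < s) (one_notMem : 1 ∉ A) : (q + 1) * (s + 1) ∉ A :=
  have s_add_one := h.right_add_one_mem_of_one_notMem hs one_notMem
  h.false_of_mem (by ring : (s + 1) + q * (s + 1) = (q + 1) * (s + 1)) s_add_one s_add_one

theorem two_mul_right_add_one_notMem_of_one_notMem (h : IsAvoiding q s ((q + 1) * (s + 1) + s) A)
    (hq : 0 < q) (hs : 0 < s) (one_notMem : 1 ∉ A) : 2 * s + 1 ∉ A := by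
  have top_mem : (q + 1) * (s + 1) + s ∈ A := by_contra fun notMem =>
    h.false_of_notMem (by ring : (q + 1) * (s + 1) + s * 1 = (q + 1) * (s + 1) + s)
      (h.mul_notMem_of_one_notMem hq hs one_notMem) one_notMem notMem
  exact fun mem => h.false_of_mem (by ring : (2 * s + 1) + q * (s + 1) = (q + 1) * (s + 1) + s)
    mem (h.right_add_one_mem_of_one_notMem hs one_notMem) top_mem

theorem two_mem_of_one_notMem (h : IsAvoiding q s ((q + 1) * (s + 1) + s) A)
    (hq : 0 < q) (hs : 0 < s) (one_notMem : 1 ∉ A) : 2 ∈ A := by_contra fun notMem =>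
  h.false_of_notMem (by ring : 1 + s * 2 = 2 * s + 1)
    one_notMem notMem (h.two_mul_right_add_one_notMem_of_one_notMem hq hs one_notMem)

theorem right_notMem_of_one_notMem (h : IsAvoiding q s ((q + 1) * (s + 1) + s) A)
    (hq : 0 < q) (hs : 0 < s) (one_notMem : 1 ∉ A) : s ∉ A := by
  intro s_mem
  have mul_mem : q * s + q + 1 ∈ A := by_contra fun notMem =>
    h.false_of_notMem (by ring : (q * s + q + 1) + s * 1 = (q + 1) * (s + 1))
      notMem one_notMem (h.mul_notMem_of_one_notMem hq hs one_notMem)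
  have q_add_one : q + 1 ∉ A := fun mem =>
    h.false_of_mem (by ring : (q + 1) + q * s = q * s + q + 1) mem s_mem mul_mem
  have mul_notMem : q * s + s + 1 ∉ A :=
    h.false_of_mem (by ring : (s + 1) + q * s = q * s + s + 1)
      (h.right_add_one_mem_of_one_notMem hs one_notMem) s_mem
  exact h.false_of_notMem (by ring : 1 + s * (q + 1) = q * s + s + 1)
    one_notMem q_add_one mul_notMem

theorem four_mem_of_one_notMem (h : IsAvoiding q s ((q + 1) * (s + 1) + s) A)
    (hs : 3 ≤ s) (hqs : s ≤ q) (one_notMem : 1 ∉ A) : 4 ∈ A := by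
  have two_mem := h.two_mem_of_one_notMem (by omega) (by omega) one_notMem
  have three_mul : 3 * s + 1 ∈ A := by_contra fun notMem =>
    h.false_of_notMem (by ring : (2 * s + 1) + s * 1 = 3 * s + 1)
      (h.two_mul_right_add_one_notMem_of_one_notMem (by omega) (by omega) one_notMem)
      one_notMem notMem
  have three_mul_add : 3 * s + 1 + 2 * q ∉ A :=
    h.false_of_mem (by ring : (3 * s + 1) + q * 2 = 3 * s + 1 + 2 * q) three_mul two_mem
  have four_mul_add : 4 * s + 1 + 2 * q ∈ A := by_contra fun notMem =>
    h.false_of_notMem (by ring : (3 * s + 1 + 2 * q) + s * 1 = 4 * s + 1 + 2 * q)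
      three_mul_add one_notMem notMem
  have four_mul : 4 * s + 1 ∉ A := fun mem =>
    h.false_of_mem (by ring : (4 * s + 1) + q * 2 = 4 * s + 1 + 2 * q) mem two_mem four_mul_add
  exact by_contra fun notMem =>
    h.false_of_notMem (by ring : 1 + s * 4 = 4 * s + 1) one_notMem notMem four_mul

theorem four_notMem_of_one_notMem (h : IsAvoiding q s ((q + 1) * (s + 1) + s) A)
    (hq : 0 < q) (hs : 3 ≤ s) (one_notMem : 1 ∉ A) : 4 ∉ A := by
  have two_mem := h.two_mem_of_one_notMem hq (by omega) one_notMem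
  have s_add_one := h.right_add_one_mem_of_one_notMem (by omega) one_notMem
  have add_two_mul : s + 1 + 2 * q ∉ A :=
    h.false_of_mem (by ring : (s + 1) + q * 2 = s + 1 + 2 * q) s_add_one two_mem
  have two_mul : 2 * q + 1 ∈ A := by_contra fun notMem =>
    h.false_of_notMem (by ring : (2 * q + 1) + s * 1 = s + 1 + 2 * q)
      notMem one_notMem add_two_mul
  have four_mul : 4 * q + 1 ∉ A :=
    h.false_of_mem (by ring : (2 * q + 1) + q * 2 = 4 * q + 1) two_mul two_mem
  have add_four_mul : s + 1 + 4 * q ∈ A := by_contra fun notMem =>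
    h.false_of_notMem (by ring : (4 * q + 1) + s * 1 = s + 1 + 4 * q)
      four_mul one_notMem notMem
  exact fun mem =>
    h.false_of_mem (by ring : (s + 1) + q * 4 = s + 1 + 4 * q) s_add_one mem add_four_mul

end IsAvoiding

theorem not_isAvoiding {q s : ℕ} (hs : 2 ≤ s) (hqs : s ≤ q) (A : Set ℕ) :
    ¬ IsAvoiding q s ((q + 1) * (s + 1) + s) A := by
  intro h
  have hs_pos : 0 < s := by omega
  have hq_pos : 0 < q := by omega
  have one_notMem : 1 ∉ A := h.one_notMem hs_pos hqs
  rcases hs.eq_or_lt with rfl | hs_three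
  · exact h.right_notMem_of_one_notMem hq_pos hs_pos one_notMem
      (h.two_mem_of_one_notMem hq_pos hs_pos one_notMem)
  · exact h.four_notMem_of_one_notMem hq_pos hs_three one_notMem
      (h.four_mem_of_one_notMem hs_three hqs one_notMem)

/-- Theorem 3.1, case `s ≥ 2`: for `q ≥ s ≥ 2`, `RR_1(q,s) = (q+1)(s+1) + s`. -/
theorem RR_one_q_s (q s : ℕ) (hs : 2 ≤ s) (hqs : s ≤ q) :
    IsLeast {N : ℕ | 0 < N ∧ ∀ χ : ℕ → Fin 2,
      (∃ x y z : ℕ, x ∈ Finset.Icc 1 N ∧ y ∈ Finset.Icc 1 N ∧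
        z ∈ Finset.Icc 1 N ∧ x + q * y = z ∧ χ x = 0 ∧ χ y = 0 ∧ χ z = 0) ∨
      (∃ x y z : ℕ, x ∈ Finset.Icc 1 N ∧ y ∈ Finset.Icc 1 N ∧
        z ∈ Finset.Icc 1 N ∧ x + s * y = z ∧ χ x = 1 ∧ χ y = 1 ∧ χ z = 1)}
      ((q + 1) * (s + 1) + s) := by
  refine ⟨⟨by positivity, ?_⟩, ?_⟩
  · exact forall_coloring_hasSolution_iff.2 (not_isAvoiding hs hqs)
  · rintro N ⟨-, hN⟩
    by_contra! N_lt
    exact forall_coloring_hasSolution_iff.1 hN _ (isAvoiding_Ico hqs N_lt)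
end

section
/- For every integer q ≥ 2, the least positive integer N such that every 2-coloring χ of {1,…,N} admits x, y, z ∈ {1,…,N} with 2x + qy = z and χ(x) = χ(y) = χ(z) is N = 2q² + 9q + 8. -/
/-!
Coloring `[a + b, (a + b)²)` with one color and the remaining positive integers with the other
leaves `a * x + b * y = z` without monochromatic solutions below `a * (a + b)² + b` when `a ≤ b`:
two values of the block sum to at least `(a + b)²`, two values before it sum into it, and a value
beyond it already makes the sum too large. For `a = 2` and `b = q` the bound is `2q² + 9q + 8`.

Conversely, in a coloring without monochromatic solutions, two equally colored members of a solution
force the third to have the other color. Starting from the colors of `1`, `q + 2` and `q`, such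
forcings reach a contradiction within `2q² + 9q + 8`, both when `1` and `q` agree and when they
do not. Since `q² + q` is even, the forced values of `x` obtained by dividing by `2` are integers.
-/

/-- The coloring `χ` has no monochromatic solution of `a * x + b * y = z` in `{1, …, N}`. Only the
values on `{1, …, N}` matter when `a` and `b` are positive, since then `x, y ≤ z`. -/
def IsSolutionFree {κ : Type*} (a b N : ℕ) (χ : ℕ → κ) : Prop :=
  ∀ x y, 0 < x → 0 < y → a * x + b * y ≤ N → χ x = χ y → χ y ≠ χ (a * x + b * y)

theorem exists_mono_solution_iff_not_isSolutionFree {κ : Type*} {a b N : ℕ} (ha : 0 < a)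
    (hb : 0 < b) (χ : ℕ → κ) :
    (∃ x y z : ℕ, x ∈ Finset.Icc 1 N ∧ y ∈ Finset.Icc 1 N ∧ z ∈ Finset.Icc 1 N ∧
      a * x + b * y = z ∧ χ x = χ y ∧ χ y = χ z) ↔ ¬ IsSolutionFree a b N χ := by
  simp only [Finset.mem_Icc]
  constructor
  · rintro ⟨x, y, _, ⟨hx, -⟩, ⟨hy, -⟩, ⟨-, hz⟩, rfl, hxy, hyz⟩ hχ
    exact hχ x y hx hy hz hxy hyz
  · intro hχ
    simp only [IsSolutionFree, not_forall, not_not] at hχ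
    obtain ⟨x, y, hx, hy, hz, hxy, hyz⟩ := hχ
    have hxz : x ≤ a * x := Nat.le_mul_of_pos_left x ha
    have hyz' : y ≤ b * y := Nat.le_mul_of_pos_left y hb
    exact ⟨x, y, _, by omega, by omega, by omega, rfl, hxy, hyz⟩

section LowerBound

/-- The 2-coloring whose color class `1` is the block `[s, s²)`. With `s = a + b` it is the extremal
coloring for `a * x + b * y = z`. -/
def blockColoring (s n : ℕ) : Fin 2 :=
  if s ≤ n ∧ n < s ^ 2 then 1 else 0

theorem blockColoring_eq_one_iff {s n : ℕ} : blockColoring s n = 1 ↔ s ≤ n ∧ n < s ^ 2 := by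
  simp [blockColoring]

variable {a b x y : ℕ}

theorem left_lt_of_mul_add_mul_lt {m : ℕ} (hy : 0 < y) (h : a * x + b * y < a * m + b) :
    x < m := by
  by_contra! hmx
  have hax : a * m ≤ a * x := Nat.mul_le_mul_left a hmx
  have hby : b ≤ b * y := Nat.le_mul_of_pos_right b hy
  omega

theorem right_lt_of_mul_add_mul_lt {m : ℕ} (hab : a ≤ b) (hm : 0 < m) (hx : 0 < x)
    (h : a * x + b * y < a * m + b) : y < m := by
  have hswap : a * m + b ≤ b * m + a := by nlinarith
  exact left_lt_of_mul_add_mul_lt hx (by omega : b * y + a * x < b * m + a)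

theorem blockColoring_isSolutionFree {N : ℕ} (hab : a ≤ b) (hN : N < a * (a + b) ^ 2 + b) :
    IsSolutionFree a b N (blockColoring (a + b)) := by
  intro x y hx hy hz hxy hyz
  have hs : 0 < a + b := by
    by_contra! hs
    obtain ⟨rfl, rfl⟩ : a = 0 ∧ b = 0 := by omega
    omega
  have hx_lt : x < (a + b) ^ 2 := left_lt_of_mul_add_mul_lt hy (hz.trans_lt hN)
  have hy_lt : y < (a + b) ^ 2 :=
    right_lt_of_mul_add_mul_lt hab (by positivity) hx (hz.trans_lt hN)
  have hxy_iff : a + b ≤ x ↔ a + b ≤ y := by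
    simpa [blockColoring_eq_one_iff, hx_lt, hy_lt] using congrArg (· = 1) hxy
  have hyz_iff : a + b ≤ y ↔ a + b ≤ a * x + b * y ∧ a * x + b * y < (a + b) ^ 2 := by
    simpa [blockColoring_eq_one_iff, hy_lt] using congrArg (· = 1) hyz
  rcases le_or_gt (a + b) y with hy_block | hy_initial
  · have hx_block := hxy_iff.2 hy_block
    have hz_beyond : (a + b) ^ 2 ≤ a * x + b * y := by nlinarith
    exact (hyz_iff.1 hy_block).2.not_ge hz_beyond
  · have hx_initial : x < a + b := by omega
    have hz_block : a + b ≤ a * x + b * y ∧ a * x + b * y < (a + b) ^ 2 :=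
      ⟨by nlinarith, by nlinarith⟩
    exact hy_initial.not_ge (hyz_iff.2 hz_block)

end LowerBound

namespace IsSolutionFree

section Forcing

variable {a b N x y z : ℕ} {χ : ℕ → Fin 2} {k l : Fin 2}

-- The default arguments check that `x, y, z` is a solution within range, which leaves only the
-- colors visible in a chain of forcings.
theorem color_sum_eq (hχ : IsSolutionFree a b N χ) (hkl : k ≠ l) (hxk : χ x = k) (hyk : χ y = k)
    (hx : 0 < x := by positivity) (hy : 0 < y := by positivity) (hz : z ≤ N := by nlinarith)
    (hxyz : a * x + b * y = z := by linarith) : χ z = l := by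
  subst hxyz
  have := hχ x y hx hy hz (hxk.trans hyk.symm)
  omega

theorem color_left_eq (hχ : IsSolutionFree a b N χ) (hkl : k ≠ l) (hyk : χ y = k) (hzk : χ z = k)
    (hx : 0 < x := by positivity) (hy : 0 < y := by positivity) (hz : z ≤ N := by nlinarith)
    (hxyz : a * x + b * y = z := by linarith) : χ x = l := by
  by_contra hxl
  have hxk : χ x = k := by omega
  exact hkl (hzk.symm.trans (hχ.color_sum_eq hkl hxk hyk hx hy hz hxyz))

theorem color_right_eq (hχ : IsSolutionFree a b N χ) (hkl : k ≠ l) (hxk : χ x = k) (hzk : χ z = k)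
    (hx : 0 < x := by positivity) (hy : 0 < y := by positivity) (hz : z ≤ N := by nlinarith)
    (hxyz : a * x + b * y = z := by linarith) : χ y = l := by
  by_contra hyl
  have hyk : χ y = k := by omega
  exact hkl (hzk.symm.trans (hχ.color_sum_eq hkl hxk hyk hx hy hz hxyz))

end Forcing

variable {q N : ℕ} {χ : ℕ → Fin 2}

theorem color_self_eq_color_one (hq : 0 < q) (hN : 2 * q ^ 2 + 5 * q ≤ N)
    (hχ : IsSolutionFree 2 q N χ) : χ q = χ 1 := by
  by_contra hq_ne
  obtain ⟨t, ht⟩ : ∃ t, q * (q + 1) = 2 * t := (Nat.even_mul_succ_self q).two_dvd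
  obtain ⟨k, h_one⟩ : ∃ k, χ 1 = k := ⟨_, rfl⟩
  obtain ⟨l, h_q⟩ : ∃ l, χ q = l := ⟨_, rfl⟩
  have hkl : k ≠ l := by omega
  have hlk : l ≠ k := hkl.symm
  have h_q_add_two : χ (q + 2) = l := hχ.color_sum_eq hkl h_one h_one
  have h_sq_add_two_mul : χ (q ^ 2 + 2 * q) = k := hχ.color_sum_eq hlk h_q h_q
  have h_sq_add_four_mul : χ (q ^ 2 + 4 * q) = k := hχ.color_sum_eq hlk h_q h_q_add_two
  have h_half : χ (t + q) = l := hχ.color_left_eq hkl h_one h_sq_add_four_mul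
  have h_last : χ (2 * q ^ 2 + 5 * q) = l := hχ.color_sum_eq hkl h_sq_add_two_mul h_one
  have h_last' : χ (2 * q ^ 2 + 5 * q) = k := hχ.color_sum_eq hlk h_half h_q_add_two
  exact hkl (h_last'.symm.trans h_last)

theorem color_self_ne_color_one (hq : 0 < q) (hN : 2 * q ^ 2 + 9 * q + 8 ≤ N)
    (hχ : IsSolutionFree 2 q N χ) : χ q ≠ χ 1 := by
  intro hq_eq
  obtain ⟨t, ht⟩ : ∃ t, q * (q + 1) = 2 * t := (Nat.even_mul_succ_self q).two_dvd
  obtain ⟨k, h_one⟩ : ∃ k, χ 1 = k := ⟨_, rfl⟩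
  obtain ⟨l, hlk⟩ : ∃ l, l ≠ k := exists_ne k
  have hkl : k ≠ l := hlk.symm
  have h_q : χ q = k := hq_eq.trans h_one
  have h_q_add_two : χ (q + 2) = l := hχ.color_sum_eq hkl h_one h_one
  have h_square : χ ((q + 2) ^ 2) = k := hχ.color_sum_eq hlk h_q_add_two h_q_add_two
  have h_top : χ (2 * q ^ 2 + 9 * q + 8) = l := hχ.color_sum_eq hkl h_square h_one
  have h_half : χ (t + 3 * q + 4) = k := hχ.color_left_eq hlk h_q_add_two h_top
  have h_sq_add_eight_mul_add_eight : χ (q ^ 2 + 8 * q + 8) = l := hχ.color_sum_eq hkl h_half h_one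
  have h_three_mul : χ (3 * q) = l := hχ.color_sum_eq hkl h_q h_one
  have h_sq_add_eight_mul : χ (q ^ 2 + 8 * q) = k := hχ.color_sum_eq hlk h_three_mul h_q_add_two
  have h_q_add_six : χ (q + 6) = l := hχ.color_right_eq hkl h_q h_sq_add_eight_mul
  have h_sq_add_twelve_mul : χ (q ^ 2 + 12 * q) = k := hχ.color_sum_eq hlk h_three_mul h_q_add_six
  have h_six_mul : χ (6 * q) = l := hχ.color_left_eq hkl h_q h_sq_add_twelve_mul
  have h_q_add_four : χ (q + 4) = k := hχ.color_left_eq hlk h_q_add_six h_sq_add_eight_mul_add_eight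
  have h_two : χ 2 = l := hχ.color_left_eq hkl h_one h_q_add_four
  have h_two_mul : χ (2 * q) = k := hχ.color_left_eq hlk h_two h_six_mul
  have h_sq_add_eight_mul' : χ (q ^ 2 + 8 * q) = l := hχ.color_sum_eq hkl h_two_mul h_q_add_four
  exact hkl (h_sq_add_eight_mul.symm.trans h_sq_add_eight_mul')

end IsSolutionFree

theorem not_isSolutionFree_two {q N : ℕ} (hq : 0 < q) (hN : 2 * q ^ 2 + 9 * q + 8 ≤ N)
    (χ : ℕ → Fin 2) : ¬ IsSolutionFree 2 q N χ := fun hχ =>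
  hχ.color_self_ne_color_one hq hN (hχ.color_self_eq_color_one hq (by omega))

/-- Theorem 3.4 (Hopkins and Schaal): for `q ≥ 2`, the 2-color Rado number of
`2x + qy = z` is `2q² + 9q + 8`. -/
theorem rado_number_two_x_add_qy (q : ℕ) (hq : 2 ≤ q) :
    IsLeast {N : ℕ | 0 < N ∧ ∀ χ : ℕ → Fin 2,
      ∃ x y z : ℕ, x ∈ Finset.Icc 1 N ∧ y ∈ Finset.Icc 1 N ∧
        z ∈ Finset.Icc 1 N ∧ 2 * x + q * y = z ∧ χ x = χ y ∧ χ y = χ z}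
      (2 * q ^ 2 + 9 * q + 8) := by
  have hq_pos : 0 < q := by omega
  simp only [exists_mono_solution_iff_not_isSolutionFree two_pos hq_pos]
  refine ⟨⟨by positivity, not_isSolutionFree_two hq_pos le_rfl⟩, ?_⟩
  rintro N ⟨-, hN⟩
  by_contra! hlt
  have h_bound : 2 * q ^ 2 + 9 * q + 8 = 2 * (2 + q) ^ 2 + q := by ring
  exact hN _ (blockColoring_isSolutionFree hq (h_bound ▸ hlt))
end

section
/- There exists a 2-coloring χ : {1, …, 1392} → {0,1} admitting no solution x, y, z in {1,…,1392} to 6x + 13y = z with χ(x) = χ(y) = χ(z) = 0 and no solution x, y, z in {1,…,1392} to 6x + 6y = z with χ(x) = χ(y) = χ(z) = 1. Consequently RR_6(13,6) > 6·6³ + 2·6² + 4·6 = 1392. -/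
/-!
Give the numbers up to a threshold `L` color 1 exactly on a set `A`, and give a number beyond `L`
color 0 exactly when it has the form `6 (a + b)` with `a, b ∈ A`. If `6 (A + A)` misses `A`, then
`6x + 6y = z` has no color-1 solution with `x, y ∈ A`, and one with `x > L` or `y > L` has
`z ≥ 6 (L + 1 + min A)`. If `6x + 13y = z` is a color-0 solution with `z > L`, then `6 ∣ z`, so
`6 ∣ y`, and dividing by 6 leaves `x + 13 (y / 6) ∈ A + A`.

Choose color 0 on `{1, 2, 3}` and color 1 from `4` on. Then `48 = 6 (4 + 4)` must have color 0,
while `51` and `57`, the values of `6x + 13y` with `x, y ≤ 3` beyond `48`, must have color 1: this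
gives `A = [4, 47] ∪ {51, 57}`. A color-0 solution of `6x + 13y = z` involving some number
`≥ 48` has `z ≥ 6 · 48 + 13 = 301`, so `L = 300` is admissible. For `z > L` one has `y / 6 ≥ 8`, and
`x + 13 (y / 6) ≤ max (A + A) = 114` leaves only the sums `105, 106, 107`, which `A + A` misses.
The coloring therefore works up to `6 (301 + 4) - 1 = 1829`.
-/

open scoped Pointwise

/-- The equation `a * x + b * y = z` has a solution in `{1, …, N}` all of whose entries receive the
color `c` under `χ`. Colorings are defined on all of `ℕ`; only the values on `{1, …, N}` matter. -/
def HasMonoSolution {C : Type*} (χ : ℕ → C) (c : C) (a b N : ℕ) : Prop :=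
  ∃ x y z : ℕ, x ∈ Finset.Icc 1 N ∧ y ∈ Finset.Icc 1 N ∧ z ∈ Finset.Icc 1 N ∧
    a * x + b * y = z ∧ χ x = c ∧ χ y = c ∧ χ z = c

/-- Every 2-coloring of `{1, …, N}` has a solution of `t * x + q * y = z` of color 0 or a solution
of `t * x + s * y = z` of color 1. The number `RR_t(q, s)` is the least positive such `N`. -/
def ForcesMonoSolution (t q s N : ℕ) : Prop :=
  ∀ χ : ℕ → Fin 2, HasMonoSolution χ 0 t q N ∨ HasMonoSolution χ 1 t s N

theorem HasMonoSolution.mono {C : Type*} {χ : ℕ → C} {c : C} {a b M N : ℕ} (hMN : M ≤ N) :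
    HasMonoSolution χ c a b M → HasMonoSolution χ c a b N := by
  have hsub : Finset.Icc 1 M ⊆ Finset.Icc 1 N := Finset.Icc_subset_Icc_right hMN
  rintro ⟨x, y, z, hx, hy, hz, hsol⟩
  exact ⟨x, y, z, hsub hx, hsub hy, hsub hz, hsol⟩

theorem ForcesMonoSolution.mono {t q s M N : ℕ} (hMN : M ≤ N) (h : ForcesMonoSolution t q s M) :
    ForcesMonoSolution t q s N :=
  fun χ => (h χ).imp (.mono hMN) (.mono hMN)

open Classical in
/-- The 2-coloring of `ℕ` equal to the indicator of `A` up to the threshold `L`, and beyond `L`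
equal to 0 exactly on the multiples `t * m` of elements `m` of the sumset `A + A`. -/
noncomputable def sumsetColoring (t L : ℕ) (A : Set ℕ) (n : ℕ) : Fin 2 :=
  if n ≤ L then if n ∈ A then 1 else 0
  else if ∃ m ∈ A + A, t * m = n then 0 else 1

namespace sumsetColoring

variable {t L : ℕ} {A : Set ℕ} {n : ℕ}

theorem eq_one_iff : sumsetColoring t L A n = 1 ↔
    n ≤ L ∧ n ∈ A ∨ L < n ∧ ¬ ∃ m ∈ A + A, t * m = n := by
  unfold sumsetColoring
  split_ifs <;> simp_all

theorem eq_zero_iff : sumsetColoring t L A n = 0 ↔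
    n ≤ L ∧ n ∉ A ∨ L < n ∧ ∃ m ∈ A + A, t * m = n := by
  unfold sumsetColoring
  split_ifs <;> simp_all

theorem le_of_eq_one {d : ℕ} (hdA : ∀ a ∈ A, d ≤ a) (hdL : d ≤ L + 1)
    (hn : sumsetColoring t L A n = 1) : d ≤ n := by
  rcases eq_one_iff.mp hn with ⟨-, hnA⟩ | ⟨hnL, -⟩
  · exact hdA n hnA
  · exact hdL.trans hnL

theorem not_hasMonoSolution_one {d N : ℕ} (hdA : ∀ a ∈ A, d ≤ a) (hdL : d ≤ L + 1)
    (hA : ∀ m ∈ A + A, t * m ∉ A) (hN : N < t * (L + 1 + d)) :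
    ¬ HasMonoSolution (sumsetColoring t L A) 1 t t N := by
  rintro ⟨x, y, z, -, -, hz, hxyz, hx, hy, hzcol⟩
  have hsum : t * (x + y) = z := by rw [mul_add, hxyz]
  have hxy : x + y < L + 1 + d := by
    refine lt_of_mul_lt_mul_left' (a := t) ?_
    calc t * (x + y) = z := hsum
      _ ≤ N := (Finset.mem_Icc.mp hz).2
      _ < t * (L + 1 + d) := hN
  have hdx : d ≤ x := le_of_eq_one hdA hdL hx
  have hdy : d ≤ y := le_of_eq_one hdA hdL hy
  rw [eq_one_iff] at hx hy hzcol
  have hxA : x ∈ A := (hx.resolve_right (by omega)).2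
  have hyA : y ∈ A := (hy.resolve_right (by omega)).2
  have hmem : x + y ∈ A + A := Set.add_mem_add hxA hyA
  rcases hzcol with ⟨-, hzA⟩ | ⟨-, hzA⟩
  · exact hA _ hmem (hsum ▸ hzA)
  · exact hzA ⟨_, hmem, hsum⟩

theorem not_hasMonoSolution_zero {q : ℕ} (ht : 0 < t) (htq : t.Coprime q)
    (hlow : ∀ x y, 0 < x → 0 < y → sumsetColoring t L A x = 0 → sumsetColoring t L A y = 0 →
      t * x + q * y ≤ L → t * x + q * y ∈ A)
    (hhigh : ∀ x k, 0 < x → 0 < k → sumsetColoring t L A x = 0 → sumsetColoring t L A (t * k) = 0 →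
      x + q * k ∉ A + A) (N : ℕ) :
    ¬ HasMonoSolution (sumsetColoring t L A) 0 t q N := by
  rintro ⟨x, y, z, hxN, hyN, -, rfl, hx, hy, hz⟩
  have hxpos : 0 < x := (Finset.mem_Icc.mp hxN).1
  have hypos : 0 < y := (Finset.mem_Icc.mp hyN).1
  rcases eq_zero_iff.mp hz with ⟨hzL, hzA⟩ | ⟨-, m, hm, hmz⟩
  · exact hzA (hlow x y hxpos hypos hx hy hzL)
  · have hty : t ∣ q * y := (Nat.dvd_add_right (dvd_mul_right t x)).mp (hmz ▸ dvd_mul_right t m)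
    obtain ⟨k, rfl⟩ : t ∣ y := htq.dvd_of_dvd_mul_left hty
    have hmk : m = x + q * k := by
      apply Nat.eq_of_mul_eq_mul_left ht
      rw [hmz]
      ring
    exact hhigh x k hxpos (Nat.pos_of_mul_pos_left hypos) hx hy (hmk ▸ hm)

end sumsetColoring

/-- The set `[4, 47] ∪ {51, 57}` of color-1 numbers up to 300 in the coloring that bounds
`RR_6(13, 6)` from below. -/
def lowColorOne : Set ℕ := Set.Icc 4 47 ∪ {51, 57}

theorem mem_lowColorOne {n : ℕ} : n ∈ lowColorOne ↔ (4 ≤ n ∧ n ≤ 47) ∨ n = 51 ∨ n = 57 := by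
  simp [lowColorOne, or_comm, or_left_comm]

theorem bounds_of_mem_lowColorOne_add_lowColorOne {m : ℕ} (hm : m ∈ lowColorOne + lowColorOne) :
    8 ≤ m ∧ m ≤ 104 ∨ m = 108 ∨ m = 114 := by
  obtain ⟨a, ha, b, hb, rfl⟩ := Set.mem_add.mp hm
  rw [mem_lowColorOne] at ha hb
  omega

theorem le_three_or_forty_eight_le_of_color_zero {n : ℕ}
    (hn : sumsetColoring 6 300 lowColorOne n = 0) : n ≤ 3 ∨ 48 ≤ n := by
  rw [sumsetColoring.eq_zero_iff, mem_lowColorOne] at hn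
  omega

theorem not_hasMonoSolution_six_thirteen (N : ℕ) :
    ¬ HasMonoSolution (sumsetColoring 6 300 lowColorOne) 0 6 13 N := by
  refine sumsetColoring.not_hasMonoSolution_zero (by norm_num) (by norm_num) ?low ?high N
  case low =>
    intro x y hx hy hxcol hycol hle
    have hx3 : x ≤ 3 := (le_three_or_forty_eight_le_of_color_zero hxcol).resolve_right (by omega)
    have hy3 : y ≤ 3 := (le_three_or_forty_eight_le_of_color_zero hycol).resolve_right (by omega)
    rw [mem_lowColorOne]
    interval_cases x <;> interval_cases y <;> norm_num
  case high =>
    intro x k hx hk hxcol hkcol hmem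
    have hsum := bounds_of_mem_lowColorOne_add_lowColorOne hmem
    have hk8 : 8 ≤ k := by
      have := le_three_or_forty_eight_le_of_color_zero hkcol
      omega
    have hx3 : x ≤ 3 := (le_three_or_forty_eight_le_of_color_zero hxcol).resolve_right (by omega)
    omega

theorem not_hasMonoSolution_six_six :
    ¬ HasMonoSolution (sumsetColoring 6 300 lowColorOne) 1 6 6 1829 := by
  refine sumsetColoring.not_hasMonoSolution_one (d := 4) ?_ (by norm_num) ?_ (by norm_num)
  · intro a ha
    rw [mem_lowColorOne] at ha
    omega
  · intro m hm
    have hsum := bounds_of_mem_lowColorOne_add_lowColorOne hm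
    rw [mem_lowColorOne]
    omega

theorem RR_six_thirteen_six_gt_general {M : ℕ} (hM : ForcesMonoSolution 6 13 6 M) : 1829 < M := by
  by_contra! hle
  exact (hM.mono hle (sumsetColoring 6 300 lowColorOne)).elim
    (not_hasMonoSolution_six_thirteen 1829) not_hasMonoSolution_six_six

/-- Remark after Theorem 3.3: there is a 2-coloring of `[1,1392]` with no
solution to `6x + 13y = z` monochromatic of color 0 and no solution to
`6x + 6y = z` monochromatic of color 1; consequently `RR_6(13,6) > 1392`. -/
theorem RR_six_thirteen_six_gt :
    (∃ χ : ℕ → Fin 2,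
      (¬ ∃ x y z : ℕ, x ∈ Finset.Icc 1 1392 ∧ y ∈ Finset.Icc 1 1392 ∧
        z ∈ Finset.Icc 1 1392 ∧ 6 * x + 13 * y = z ∧
        χ x = 0 ∧ χ y = 0 ∧ χ z = 0) ∧
      (¬ ∃ x y z : ℕ, x ∈ Finset.Icc 1 1392 ∧ y ∈ Finset.Icc 1 1392 ∧
        z ∈ Finset.Icc 1 1392 ∧ 6 * x + 6 * y = z ∧
        χ x = 1 ∧ χ y = 1 ∧ χ z = 1)) ∧
    (∀ M : ℕ, 0 < M →
      (∀ χ : ℕ → Fin 2,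
        (∃ x y z : ℕ, x ∈ Finset.Icc 1 M ∧ y ∈ Finset.Icc 1 M ∧
          z ∈ Finset.Icc 1 M ∧ 6 * x + 13 * y = z ∧
          χ x = 0 ∧ χ y = 0 ∧ χ z = 0) ∨
        (∃ x y z : ℕ, x ∈ Finset.Icc 1 M ∧ y ∈ Finset.Icc 1 M ∧
          z ∈ Finset.Icc 1 M ∧ 6 * x + 6 * y = z ∧
          χ x = 1 ∧ χ y = 1 ∧ χ z = 1)) →
      1392 < M) := by
  have not_forces : ¬ ForcesMonoSolution 6 13 6 1392 := fun h =>
    absurd (RR_six_thirteen_six_gt_general h) (by norm_num)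
  exact ⟨(not_forall.mp not_forces).imp fun _ => not_or.mp,
    fun _ _ hM => lt_trans (by norm_num) (RR_six_thirteen_six_gt_general hM)⟩
end

section
/- RR_3(4,3) = 129. That is, 129 is the least positive integer N such that every 2-coloring χ of {1,…,N} admits x, y, z ∈ {1,…,N} with 3x + 4y = z and χ(x) = χ(y) = χ(z) = 0, or x, y, z ∈ {1,…,N} with 3x + 3y = z and χ(x) = χ(y) = χ(z) = 1. -/
/-!
Color the interval `[c + d, M)`, where `M = (a + b)(c + d)`, with `0` and everything else with `1`.
A value `a x + b y` with `x` and `y` in the interval is at least `M`. If `x` and `y` both lie below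
the interval, then `c x + d y` falls into it, and if one of them lies above it, then
`c x + d y` is at least `min (c M + d) (c + d M)`. For `3x + 4y = z` and `3x + 3y = z` this gives
`M = 42` and the lower bound `3 * 42 + 3 = 129`.

For the upper bound, the solutions with `x = y` show that in a coloring without the forbidden
solutions `6n` and `7n` have the color opposite to that of `n`, as long as `42n ≤ N`. Together with
a few mixed solutions, this forces `1` to have color `1`, and `3` to have color `0` if `2` has.
A coloring of `{1, …, 129}` would give `2` color `0` but `3` color `1`.
-/

/-- The coloring `χ` has no solution of `a x + b y = z` in `{1, …, N}` monochromatic of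
color `i`. Colorings are defined on all of `ℕ`, but only their values on `{1, …, N}` matter. -/
def MonoFree (a b N : ℕ) (χ : ℕ → Fin 2) (i : Fin 2) : Prop :=
  ¬∃ x y z : ℕ, x ∈ Finset.Icc 1 N ∧ y ∈ Finset.Icc 1 N ∧ z ∈ Finset.Icc 1 N ∧
    a * x + b * y = z ∧ χ x = i ∧ χ y = i ∧ χ z = i

/-- The coloring with color class `0` equal to the interval `[m, M)`; it is extremal for the
lower bound. -/
def intervalColoring (m M : ℕ) (n : ℕ) : Fin 2 :=
  if n ∈ Finset.Ico m M then 0 else 1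

theorem intervalColoring_eq_zero_iff {m M n : ℕ} :
    intervalColoring m M n = 0 ↔ m ≤ n ∧ n < M := by
  simp [intervalColoring]

theorem intervalColoring_eq_one_iff {m M n : ℕ} :
    intervalColoring m M n = 1 ↔ n < m ∨ M ≤ n := by
  simp [intervalColoring, imp_iff_not_or]

theorem monoFree_zero_intervalColoring (a b m N : ℕ) :
    MonoFree a b N (intervalColoring m ((a + b) * m)) 0 := by
  rintro ⟨x, y, z, -, -, -, rfl, hx, hy, hz⟩
  rw [intervalColoring_eq_zero_iff] at hx hy hz
  refine hz.2.not_ge ?_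
  calc (a + b) * m = a * m + b * m := add_mul a b m
    _ ≤ a * x + b * y := by gcongr; exacts [hx.1, hy.1]

theorem monoFree_one_intervalColoring {c d k N : ℕ} (hk : c + d ≤ k)
    (hcN : N < c * (k * (c + d)) + d) (hdN : N < c + d * (k * (c + d))) :
    MonoFree c d N (intervalColoring (c + d) (k * (c + d))) 1 := by
  rintro ⟨x, y, z, hx, hy, hz, rfl, hx₁, hy₁, hz₁⟩
  rw [Finset.mem_Icc] at hx hy hz
  rw [intervalColoring_eq_one_iff] at hx₁ hy₁ hz₁
  have x_lt : x < k * (c + d) := by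
    by_contra! hM
    have : c * (k * (c + d)) + d * 1 ≤ c * x + d * y := by gcongr; exact hy.1
    omega
  have y_lt : y < k * (c + d) := by
    by_contra! hM
    have : c * 1 + d * (k * (c + d)) ≤ c * x + d * y := by gcongr; exact hx.1
    omega
  have hxs : x < c + d := hx₁.resolve_right x_lt.not_ge
  have hys : y < c + d := hy₁.resolve_right y_lt.not_ge
  have lower : c + d ≤ c * x + d * y := by
    calc c + d = c * 1 + d * 1 := by ring
      _ ≤ c * x + d * y := by gcongr; exacts [hx.1, hy.1]
  have upper : c * x + d * y < k * (c + d) := by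
    calc c * x + d * y < c * x + d * y + (c + d) := by omega
      _ = c * (x + 1) + d * (y + 1) := by ring
      _ ≤ c * k + d * k := by gcongr <;> omega
      _ = k * (c + d) := by ring
  omega

theorem exists_monoFree_zero_and_one {a b c d N : ℕ} (h : c + d ≤ a + b)
    (hcN : N < c * ((a + b) * (c + d)) + d) (hdN : N < c + d * ((a + b) * (c + d))) :
    ∃ χ : ℕ → Fin 2, MonoFree a b N χ 0 ∧ MonoFree c d N χ 1 :=
  ⟨_, monoFree_zero_intervalColoring a b (c + d) N, monoFree_one_intervalColoring h hcN hdN⟩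

theorem eq_rev_of_ne {i j : Fin 2} (h : j ≠ i) : j = i.rev := by
  decide +revert

namespace MonoFree

variable {a b c d N : ℕ} {χ : ℕ → Fin 2} {i : Fin 2}
variable [NeZero a] [NeZero b] [NeZero c] [NeZero d]

theorem not_mono (h : MonoFree a b N χ i) {x y : ℕ} (hx : 0 < x) (hy : 0 < y)
    (hN : a * x + b * y ≤ N) : ¬(χ x = i ∧ χ y = i ∧ χ (a * x + b * y) = i) := by
  intro hi
  have hxa : x ≤ a * x := Nat.le_mul_of_pos_left x (NeZero.pos a)
  have hyb : y ≤ b * y := Nat.le_mul_of_pos_left y (NeZero.pos b)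
  exact h ⟨x, y, _, Finset.mem_Icc.2 (by omega), Finset.mem_Icc.2 (by omega),
    Finset.mem_Icc.2 (by omega), rfl, hi⟩

theorem color_add_eq_rev (h : MonoFree a b N χ i) (x y : ℕ) (hxi : χ x = i) (hyi : χ y = i)
    (hx : 0 < x := by omega) (hy : 0 < y := by omega) (hN : a * x + b * y ≤ N := by omega) :
    χ (a * x + b * y) = i.rev :=
  eq_rev_of_ne fun hzi => h.not_mono hx hy hN ⟨hxi, hyi, hzi⟩

theorem color_left_eq_rev (h : MonoFree a b N χ i) (x y : ℕ) (hyi : χ y = i)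
    (hzi : χ (a * x + b * y) = i)
    (hx : 0 < x := by omega) (hy : 0 < y := by omega) (hN : a * x + b * y ≤ N := by omega) :
    χ x = i.rev :=
  eq_rev_of_ne fun hxi => h.not_mono hx hy hN ⟨hxi, hyi, hzi⟩

theorem color_right_eq_rev (h : MonoFree a b N χ i) (x y : ℕ) (hxi : χ x = i)
    (hzi : χ (a * x + b * y) = i)
    (hx : 0 < x := by omega) (hy : 0 < y := by omega) (hN : a * x + b * y ≤ N := by omega) :
    χ y = i.rev :=
  eq_rev_of_ne fun hyi => h.not_mono hx hy hN ⟨hxi, hyi, hzi⟩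

theorem color_mul_eq_rev (h : MonoFree a b N χ i) (x : ℕ) (hxi : χ x = i)
    (hx : 0 < x := by omega) (hN : (a + b) * x ≤ N := by omega) :
    χ ((a + b) * x) = i.rev := by
  rw [add_mul] at hN ⊢
  exact h.color_add_eq_rev x x hxi hxi

theorem color_eq_rev_of_mul (h : MonoFree a b N χ i) (x : ℕ) (hzi : χ ((a + b) * x) = i)
    (hx : 0 < x := by omega) (hN : (a + b) * x ≤ N := by omega) :
    χ x = i.rev := by
  rw [add_mul] at hN hzi
  exact eq_rev_of_ne fun hxi => h.not_mono hx hx hN ⟨hxi, hxi, hzi⟩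

theorem color_mul_eq_rev_of_rev (h : MonoFree a b N χ i) (h' : MonoFree c d N χ i.rev) (x : ℕ)
    (hxi : χ x = i) (hx : 0 < x := by omega) (hN : (a + b) * ((c + d) * x) ≤ N := by omega) :
    χ ((c + d) * x) = i.rev := by
  have hab : 0 < a + b := Nat.add_pos_left (NeZero.pos a) b
  have hcd : 0 < c + d := Nat.add_pos_left (NeZero.pos c) d
  have hN' : (c + d) * ((a + b) * x) ≤ N := by rwa [mul_left_comm]
  have h_ab : χ ((a + b) * x) = i.rev :=
    h.color_mul_eq_rev x hxi hx ((Nat.le_mul_of_pos_left _ hcd).trans hN')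
  have h_abcd : χ ((a + b) * ((c + d) * x)) = i := by
    rw [mul_left_comm, h'.color_mul_eq_rev _ h_ab (Nat.mul_pos hab hx) hN', Fin.rev_rev]
  exact h.color_eq_rev_of_mul _ h_abcd (Nat.mul_pos hcd hx) hN

end MonoFree

section ThreeFourThree

variable {N : ℕ} {χ : ℕ → Fin 2}

theorem color_three_eq_zero_of_color_two_eq_zero (h₀ : MonoFree 3 4 N χ 0)
    (h₁ : MonoFree 3 3 N χ 1) (hN : 84 ≤ N) (h2 : χ 2 = 0) : χ 3 = 0 := by
  have h12 : χ 12 = 1 := h₀.color_mul_eq_rev_of_rev h₁ 2 h2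
  have h14 : χ 14 = 1 := h₀.color_mul_eq_rev 2 h2
  have h78 : χ 78 = 0 := h₁.color_add_eq_rev 12 14 h12 h14
  have h18 : χ 18 = 1 := h₀.color_right_eq_rev 2 18 h2 h78
  exact h₁.color_eq_rev_of_mul 3 h18

theorem color_one_eq_one_of_color_two_eq_zero (h₀ : MonoFree 3 4 N χ 0)
    (h₁ : MonoFree 3 3 N χ 1) (hN : 120 ≤ N) (h2 : χ 2 = 0) : χ 1 = 1 := by
  have h3 : χ 3 = 0 := color_three_eq_zero_of_color_two_eq_zero h₀ h₁ (by omega) h2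
  have h12 : χ 12 = 1 := h₀.color_mul_eq_rev_of_rev h₁ 2 h2
  have h72 : χ 72 = 0 := h₁.color_mul_eq_rev 12 h12
  have h20 : χ 20 = 1 := h₀.color_left_eq_rev 20 3 h3 h72
  have h120 : χ 120 = 0 := h₁.color_mul_eq_rev 20 h20
  have h36 : χ 36 = 1 := h₀.color_left_eq_rev 36 3 h3 h120
  have h6 : χ 6 = 0 := h₁.color_eq_rev_of_mul 6 h36
  have h42 : χ 42 = 1 := h₀.color_mul_eq_rev 6 h6
  have h7 : χ 7 = 0 := h₁.color_eq_rev_of_mul 7 h42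
  exact h₀.color_eq_rev_of_mul 1 h7

theorem color_one_eq_one_of_color_two_eq_one (h₀ : MonoFree 3 4 N χ 0)
    (h₁ : MonoFree 3 3 N χ 1) (hN : 126 ≤ N) (h2 : χ 2 = 1) : χ 1 = 1 := by
  have h12 : χ 12 = 0 := h₁.color_mul_eq_rev 2 h2
  have h84 : χ 84 = 1 := h₀.color_mul_eq_rev 12 h12
  have h26 : χ 26 = 0 := h₁.color_right_eq_rev 2 26 h2 h84
  have h126 : χ 126 = 1 := h₀.color_add_eq_rev 26 12 h26 h12
  have h40 : χ 40 = 0 := h₁.color_right_eq_rev 2 40 h2 h126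
  exact h₀.color_right_eq_rev 12 1 h12 h40

theorem color_one_eq_one (h₀ : MonoFree 3 4 N χ 0) (h₁ : MonoFree 3 3 N χ 1) (hN : 126 ≤ N) :
    χ 1 = 1 := by
  by_cases h2 : χ 2 = 0
  · exact color_one_eq_one_of_color_two_eq_zero h₀ h₁ (by omega) h2
  · exact color_one_eq_one_of_color_two_eq_one h₀ h₁ hN (eq_rev_of_ne h2)

theorem not_monoFree_three_three_of_monoFree_three_four (hN : 129 ≤ N)
    (h₀ : MonoFree 3 4 N χ 0) : ¬MonoFree 3 3 N χ 1 := by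
  intro h₁
  have h1 : χ 1 = 1 := color_one_eq_one h₀ h₁ (by omega)
  have h6 : χ 6 = 0 := h₁.color_mul_eq_rev 1 h1
  have h42 : χ 42 = 1 := h₀.color_mul_eq_rev 6 h6
  have h7 : χ 7 = 0 := h₁.color_eq_rev_of_mul 7 h42
  have h129 : χ 129 = 0 := h₁.color_add_eq_rev 1 42 h1 h42
  have h27 : χ 27 = 1 := h₀.color_right_eq_rev 7 27 h7 h129
  have h84 : χ 84 = 0 := h₁.color_add_eq_rev 1 27 h1 h27
  have h12 : χ 12 = 1 := h₀.color_eq_rev_of_mul 12 h84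
  have h2 : χ 2 = 0 := h₁.color_eq_rev_of_mul 2 h12
  have h39 : χ 39 = 0 := h₁.color_add_eq_rev 1 12 h1 h12
  have h3 : χ 3 = 1 := h₀.color_right_eq_rev 39 3 h39 h129
  have h3' : χ 3 = 0 := color_three_eq_zero_of_color_two_eq_zero h₀ h₁ (by omega) h2
  exact zero_ne_one (h3'.symm.trans h3)

end ThreeFourThree

/-- `RR_3(4,3) = 129`: the least positive `N` such that every 2-coloring of
`{1,…,N}` admits a solution to `3x + 4y = z` monochromatic of color 0 or a
solution to `3x + 3y = z` monochromatic of color 1 is `129`. -/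
theorem RR_3_4_3 :
    IsLeast {N : ℕ | 0 < N ∧ ∀ χ : ℕ → Fin 2,
      (∃ x y z : ℕ, x ∈ Finset.Icc 1 N ∧ y ∈ Finset.Icc 1 N ∧
        z ∈ Finset.Icc 1 N ∧ 3 * x + 4 * y = z ∧ χ x = 0 ∧ χ y = 0 ∧ χ z = 0) ∨
      (∃ x y z : ℕ, x ∈ Finset.Icc 1 N ∧ y ∈ Finset.Icc 1 N ∧
        z ∈ Finset.Icc 1 N ∧ 3 * x + 3 * y = z ∧ χ x = 1 ∧ χ y = 1 ∧ χ z = 1)}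
      129 := by
  refine ⟨⟨by norm_num, fun χ => ?_⟩, fun N ⟨_, hN⟩ => ?_⟩
  · by_contra h
    obtain ⟨h₀, h₁⟩ := not_or.1 h
    exact not_monoFree_three_three_of_monoFree_three_four le_rfl h₀ h₁
  · by_contra! hlt
    obtain ⟨χ, h₀, h₁⟩ :=
      exists_monoFree_zero_and_one (a := 3) (b := 4) (c := 3) (d := 3) (by norm_num) hlt hlt
    exact (hN χ).elim h₀ h₁
end
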